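/- arXiv:1509.08510 — 3 statements merged into one kernel-verified Lean document; each statement's English description precedes it below -/
import Mathlib

section
/- Sharp bilinear estimate: for every s ≥ 0 there is a constant C = C_s > 0 such that for all u, v ∈ H^s(ℝ), ‖ω(∂_x)(uv)‖_{H^s} ≤ C ‖u‖_{H^s} ‖v‖_{H^s}, where ω(∂_x) is the Fourier multiplier operator with symbol ω(ξ) = |ξ|/(1 + ξ²). -/
/-!
STATEMENT 4 (sharp bilinear estimate, Lemma 2.3 of Bona–Carvajal–Panthee–Scialom):
for every `s ≥ 0` there is `C = C_s > 0` such that for all `u, v ∈ Hˢ(ℝ)`,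
`‖ω(∂ₓ)(uv)‖_{Hˢ} ≤ C ‖u‖_{Hˢ} ‖v‖_{Hˢ}`, where `ω(∂ₓ)` is the Fourier multiplier
with symbol `ω(k) = |k|/(1+k²)`.

The Sobolev space `Hˢ(ℝ)` is formalized on the Fourier side.  With Mathlib's
Fourier transform `𝓕 f ξ = ∫ e^{-2πixξ} f x dx`, the classical frequency variable
is `k = 2πξ` and `∫ (1+(2πξ)²)^s ‖𝓕 f ξ‖² dξ = ∫ (1+k²)^s |f̂(k)|² dk`, which is
exactly the classical squared `Hˢ` norm (with `f̂(k) = (2π)^{-1/2}∫ e^{-ixk} f dx`).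
Membership is stated for integrable representatives, so that the Fourier integral
is the honest Fourier transform.
-/

noncomputable section
open MeasureTheory Real Set
open scoped FourierTransform

/-- Squared `Hˢ(ℝ)` norm, computed on the Fourier side. -/
def hNormSq (s : ℝ) (f : ℝ → ℂ) : ℝ :=
  ∫ ξ : ℝ, (1 + (2 * π * ξ) ^ 2) ^ s * ‖𝓕 f ξ‖ ^ 2

/-- The `Hˢ(ℝ)` norm. -/
def hNorm (s : ℝ) (f : ℝ → ℂ) : ℝ :=
  Real.sqrt (hNormSq s f)

/-- Membership in `Hˢ(ℝ)`. -/
def MemHs (s : ℝ) (f : ℝ → ℂ) : Prop :=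
  Integrable f ∧ Integrable (fun ξ : ℝ => (1 + (2 * π * ξ) ^ 2) ^ s * ‖𝓕 f ξ‖ ^ 2)

/-- The `Hˢ` norm of `m(∂ₓ) g`, where `m : ℝ → ℂ` is a Fourier multiplier symbol in
the classical frequency variable `k = 2πξ`. -/
def multHNorm (s : ℝ) (m : ℝ → ℂ) (g : ℝ → ℂ) : ℝ :=
  Real.sqrt (∫ ξ : ℝ, (1 + (2 * π * ξ) ^ 2) ^ s * ‖m (2 * π * ξ) * 𝓕 g ξ‖ ^ 2)

/-! The `Hˢ` weight is submultiplicative up to `2^(s/2)`, so it distributes over the convolution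
`𝓕 (u v) = 𝓕 u ⋆ 𝓕 v`, and Cauchy–Schwarz bounds the weighted transform of `u v` *uniformly* by
`2^(s/2) ‖u‖ ‖v‖`. A multiplier in `L²`, such as `|k| / (1 + k²)`, turns this uniform bound into a
bound of the `Hˢ` norm. As only `L²` control of `𝓕 u` and `𝓕 v` is available, the convolution
formula is obtained from Plancherel's theorem rather than from Fubini's. -/

open scoped Convolution ContDiff SchwartzMap ComplexConjugate

section FourierTransform

variable {E F : Type*} [NormedAddCommGroup E] [InnerProductSpace ℝ E] [FiniteDimensional ℝ E]
  [MeasurableSpace E] [BorelSpace E] [NormedAddCommGroup F]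

theorem continuous_fourier_of_integrable [NormedSpace ℂ F] {f : E → F} (hf : Integrable f) :
    Continuous (𝓕 f) :=
  VectorFourier.fourierIntegral_continuous continuous_fourierChar continuous_inner hf

theorem integral_fourier_smul_eq_of_integrable [NormedSpace ℂ F] [CompleteSpace F]
    {f : E → ℂ} {g : E → F} (hf : Integrable f) (hg : Integrable g) :
    ∫ x, 𝓕 f x • g x = ∫ x, f x • 𝓕 g x := by
  have h := VectorFourier.integral_fourierIntegral_smul_eq_flip (μ := volume) (ν := volume)
    (L := innerₗ E) continuous_fourierChar continuous_inner hf hg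
  rwa [flip_innerₗ] at h

theorem ae_eq_of_forall_integral_schwartz_smul_eq [NormedSpace ℂ F] [CompleteSpace F]
    {f g : E → F} (hf : LocallyIntegrable f) (hg : LocallyIntegrable g)
    (h : ∀ φ : 𝓢(E, ℂ), ∫ x, φ x • f x = ∫ x, φ x • g x) : f =ᵐ[volume] g := by
  refine ae_eq_of_integral_contDiff_smul_eq hf hg fun φ hφ hφc => ?_
  have hφc' : HasCompactSupport (Complex.ofRealCLM ∘ φ) := hφc.comp_left rfl
  have hφ' : ContDiff ℝ ∞ (Complex.ofRealCLM ∘ φ) := Complex.ofRealCLM.contDiff.comp hφ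
  simpa using h (hφc'.toSchwartzMap hφ')

variable [InnerProductSpace ℂ F] [CompleteSpace F]

theorem integral_schwartz_smul_fourier_eq (φ : 𝓢(E, ℂ)) (f : Lp F 2 (volume : Measure E)) :
    ∫ x, φ x • (𝓕 f : Lp F 2 (volume : Measure E)) x = ∫ x, (𝓕 φ) x • f x := by
  rw [← Lp.toTemperedDistribution_apply, ← Lp.fourier_toTemperedDistribution_eq,
    TemperedDistribution.fourier_apply, Lp.toTemperedDistribution_apply]

theorem fourierInv_toLp_fourier_ae_eq {f : E → F} (hf : Integrable f) (hf' : MemLp (𝓕 f) 2) :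
    (𝓕⁻ (hf'.toLp (𝓕 f)) : Lp F 2 (volume : Measure E)) =ᵐ[volume] f := by
  set g : Lp F 2 (volume : Measure E) := 𝓕⁻ (hf'.toLp (𝓕 f))
  have h𝓕g : 𝓕 g = hf'.toLp (𝓕 f) := FourierTransform.fourier_fourierInv_eq _
  refine ae_eq_of_forall_integral_schwartz_smul_eq ((Lp.memLp g).locallyIntegrable one_le_two)
    hf.locallyIntegrable fun ψ => ?_
  obtain ⟨φ, rfl⟩ : ∃ φ : 𝓢(E, ℂ), 𝓕 φ = ψ := ⟨𝓕⁻ ψ, FourierTransform.fourier_fourierInv_eq ψ⟩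
  calc ∫ x, (𝓕 φ) x • g x = ∫ x, φ x • (𝓕 g : Lp F 2 (volume : Measure E)) x :=
        (integral_schwartz_smul_fourier_eq φ g).symm
    _ = ∫ x, φ x • 𝓕 f x := by
        refine integral_congr_ae ?_
        filter_upwards [hf'.coeFn_toLp] with x hx
        rw [h𝓕g, hx]
    _ = ∫ x, (𝓕 φ) x • f x := by
        rw [← integral_fourier_smul_eq_of_integrable φ.integrable hf, SchwartzMap.fourier_coe]

theorem integral_inner_fourier_eq_of_memLp {f g : E → F} (hf : Integrable f)
    (hf' : MemLp (𝓕 f) 2) (hg : Integrable g) (hg' : MemLp (𝓕 g) 2) :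
    ∫ ξ, inner ℂ (𝓕 f ξ) (𝓕 g ξ) = ∫ x, inner ℂ (f x) (g x) := by
  calc ∫ ξ, inner ℂ (𝓕 f ξ) (𝓕 g ξ) = inner ℂ (hf'.toLp (𝓕 f)) (hg'.toLp (𝓕 g)) := by
        rw [L2.inner_def]
        refine integral_congr_ae ?_
        filter_upwards [hf'.coeFn_toLp, hg'.coeFn_toLp] with ξ hfξ hgξ
        rw [hfξ, hgξ]
    _ = inner ℂ (𝓕⁻ (hf'.toLp (𝓕 f)) : Lp F 2 (volume : Measure E)) (𝓕⁻ (hg'.toLp (𝓕 g))) := by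
        rw [← Lp.inner_fourier_eq (𝓕⁻ _), FourierTransform.fourier_fourierInv_eq,
          FourierTransform.fourier_fourierInv_eq]
    _ = ∫ x, inner ℂ (f x) (g x) := by
        rw [L2.inner_def]
        refine integral_congr_ae ?_
        filter_upwards [fourierInv_toLp_fourier_ae_eq hf hf',
          fourierInv_toLp_fourier_ae_eq hg hg'] with x hfx hgx
        rw [hfx, hgx]

theorem fourier_conj_fourierChar_mul (f : E → ℂ) (ξ η : E) :
    𝓕 (fun x => conj (𝐞 (-inner ℝ x ξ) * f x)) η = conj (𝓕 f (ξ - η)) := by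
  rw [fourier_eq, fourier_eq, ← integral_conj]
  congr with x
  simp only [Circle.smul_def, smul_eq_mul, map_mul, ← mul_assoc, ← Circle.coe_inv_eq_conj,
    ← AddChar.map_neg_eq_inv, ← Circle.coe_mul, ← AddChar.map_add_eq_mul, inner_sub_right]
  congr 4
  ring

theorem fourier_mul_eq_convolution {f g : E → ℂ} (hf : Integrable f) (hf' : MemLp (𝓕 f) 2)
    (hg : Integrable g) (hg' : MemLp (𝓕 g) 2) :
    𝓕 (fun x => f x * g x) = 𝓕 f ⋆[ContinuousLinearMap.mul ℂ ℂ] 𝓕 g := by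
  ext ξ
  set w : E → ℂ := fun x => conj (𝐞 (-inner ℝ x ξ) * g x) with hw
  have hw_int : Integrable w := by
    have hmod : Integrable fun x => 𝐞 (-inner ℝ x ξ) • g x :=
      (fourierIntegral_convergent_iff ξ).2 hg
    exact Complex.conjCLE.integrable_comp_iff.2 hmod
  have h𝓕w : 𝓕 w = fun η => conj (𝓕 g (ξ - η)) := funext (fourier_conj_fourierChar_mul g ξ)
  have h𝓕w' : MemLp (𝓕 w) 2 := by
    rw [h𝓕w]
    exact (hg'.comp_measurePreserving (Measure.measurePreserving_sub_left volume ξ)).star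
  calc 𝓕 (fun x => f x * g x) ξ = ∫ x, inner ℂ (w x) (f x) := by
        rw [fourier_eq]
        congr with x
        rw [RCLike.inner_apply, hw, Complex.conj_conj, Circle.smul_def, smul_eq_mul]
        ring
    _ = ∫ η, inner ℂ (𝓕 w η) (𝓕 f η) :=
        (integral_inner_fourier_eq_of_memLp hw_int h𝓕w' hf hf').symm
    _ = ∫ η, 𝓕 f η * 𝓕 g (ξ - η) := by
        simp only [h𝓕w, RCLike.inner_apply, Complex.conj_conj]

end FourierTransform

section CauchySchwarz

theorem integral_mul_le_sqrt_mul_sqrt {α : Type*} [MeasurableSpace α] {μ : Measure α}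
    {f g : α → ℝ} (hf : MemLp f 2 μ) (hg : MemLp g 2 μ) :
    ∫ x, f x * g x ∂μ ≤ √(∫ x, f x ^ 2 ∂μ) * √(∫ x, g x ^ 2 ∂μ) := by
  calc ∫ x, f x * g x ∂μ ≤ ∫ x, ‖f x‖ * ‖g x‖ ∂μ := by
        simp only [← norm_mul]
        exact (le_norm_self _).trans (norm_integral_le_integral_norm _)
    _ ≤ √(∫ x, f x ^ 2 ∂μ) * √(∫ x, g x ^ 2 ∂μ) := by
        simpa only [rpow_two, norm_eq_abs, sq_abs, ← sqrt_eq_rpow] using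
          integral_mul_norm_le_Lp_mul_Lq (f := f) (g := g) HolderConjugate.two_two
            (by rwa [ENNReal.ofReal_ofNat]) (by rwa [ENNReal.ofReal_ofNat])

theorem convolution_mul_le_sqrt_mul_sqrt {G : Type*} [AddGroup G] [MeasurableSpace G]
    [MeasurableAdd G] [MeasurableNeg G] {μ : Measure G} [μ.IsAddLeftInvariant] [μ.IsNegInvariant]
    {f g : G → ℝ} (hf : MemLp f 2 μ) (hg : MemLp g 2 μ) (x : G) :
    (f ⋆[ContinuousLinearMap.mul ℝ ℝ, μ] g) x ≤ √(∫ y, f y ^ 2 ∂μ) * √(∫ y, g y ^ 2 ∂μ) := by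
  have hg_sub : MemLp (fun y => g (x - y)) 2 μ :=
    hg.comp_measurePreserving (Measure.measurePreserving_sub_left μ x)
  have hg_sq : ∫ y, g (x - y) ^ 2 ∂μ = ∫ y, g y ^ 2 ∂μ :=
    integral_sub_left_eq_self (fun y => g y ^ 2) μ x
  rw [convolution_mul, ← hg_sq]
  exact integral_mul_le_sqrt_mul_sqrt hf hg_sub

end CauchySchwarz

section SobolevWeight

/-- The Sobolev weight `(1 + k²)^(s/2)` at the classical frequency `k = 2πξ`. It is the square root
of the density in `hNormSq`, so that `‖f‖_{Hˢ}` is the `L²` norm of `sobolevWeight s * ‖𝓕 f‖`. -/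
def sobolevWeight (s ξ : ℝ) : ℝ :=
  (1 + (2 * π * ξ) ^ 2) ^ (s / 2)

theorem sobolevWeight_nonneg (s ξ : ℝ) : 0 ≤ sobolevWeight s ξ := by
  unfold sobolevWeight
  positivity

theorem one_le_sobolevWeight {s : ℝ} (hs : 0 ≤ s) (ξ : ℝ) : 1 ≤ sobolevWeight s ξ :=
  one_le_rpow (le_add_of_nonneg_right (sq_nonneg _)) (by positivity)

theorem sobolevWeight_sq (s ξ : ℝ) : sobolevWeight s ξ ^ 2 = (1 + (2 * π * ξ) ^ 2) ^ s := by
  rw [sobolevWeight, ← rpow_mul_natCast (by positivity), Nat.cast_ofNat,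
    div_mul_cancel₀ s two_ne_zero]

theorem continuous_sobolevWeight (s : ℝ) : Continuous (sobolevWeight s) :=
  Continuous.rpow_const (by fun_prop) fun ξ => .inl (by positivity)

theorem one_add_norm_add_sq_le {V : Type*} [SeminormedAddCommGroup V] (x y : V) :
    1 + ‖x + y‖ ^ 2 ≤ 2 * ((1 + ‖x‖ ^ 2) * (1 + ‖y‖ ^ 2)) := by
  have htri : ‖x + y‖ ^ 2 ≤ (‖x‖ + ‖y‖) ^ 2 := by
    gcongr
    exact norm_add_le x y
  nlinarith [sq_nonneg (‖x‖ - ‖y‖), mul_nonneg (sq_nonneg ‖x‖) (sq_nonneg ‖y‖)]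

theorem sobolevWeight_add_le {s : ℝ} (hs : 0 ≤ s) (ξ η : ℝ) :
    sobolevWeight s (ξ + η) ≤ 2 ^ (s / 2) * (sobolevWeight s ξ * sobolevWeight s η) := by
  unfold sobolevWeight
  rw [← mul_rpow (by positivity) (by positivity), ← mul_rpow (by positivity) (by positivity)]
  refine rpow_le_rpow (by positivity) ?_ (by positivity)
  simpa only [norm_eq_abs, sq_abs, ← mul_add] using one_add_norm_add_sq_le (2 * π * ξ) (2 * π * η)

end SobolevWeight

section SobolevNorm

variable {s : ℝ} {u v : ℝ → ℂ}

theorem hNorm_eq_sqrt_integral_sobolevWeight (s : ℝ) (f : ℝ → ℂ) :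
    hNorm s f = √(∫ ξ, (sobolevWeight s ξ * ‖𝓕 f ξ‖) ^ 2) := by
  simp only [hNorm, hNormSq, mul_pow, sobolevWeight_sq]

theorem MemHs.memLp_sobolevWeight_mul (hu : MemHs s u) :
    MemLp (fun ξ => sobolevWeight s ξ * ‖𝓕 u ξ‖) 2 := by
  have hcont : Continuous fun ξ => sobolevWeight s ξ * ‖𝓕 u ξ‖ :=
    (continuous_sobolevWeight s).mul (continuous_fourier_of_integrable hu.1).norm
  rw [memLp_two_iff_integrable_sq hcont.aestronglyMeasurable]
  simpa only [mul_pow, sobolevWeight_sq] using hu.2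

theorem MemHs.memLp_fourier (hs : 0 ≤ s) (hu : MemHs s u) : MemLp (𝓕 u) 2 :=
  hu.memLp_sobolevWeight_mul.mono (continuous_fourier_of_integrable hu.1).aestronglyMeasurable <|
    .of_forall fun ξ => by
      rw [norm_mul, norm_norm]
      exact le_mul_of_one_le_left (norm_nonneg _)
        ((one_le_sobolevWeight hs ξ).trans (le_abs_self _))

theorem sobolevWeight_mul_norm_convolution_le (hs : 0 ≤ s) {f g : ℝ → ℂ}
    (hf : MemLp (fun ξ => sobolevWeight s ξ * ‖f ξ‖) 2)
    (hg : MemLp (fun ξ => sobolevWeight s ξ * ‖g ξ‖) 2) (ξ : ℝ) :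
    sobolevWeight s ξ * ‖(f ⋆[ContinuousLinearMap.mul ℂ ℂ] g) ξ‖ ≤
      2 ^ (s / 2) * ((fun η => sobolevWeight s η * ‖f η‖) ⋆[ContinuousLinearMap.mul ℝ ℝ]
        fun η => sobolevWeight s η * ‖g η‖) ξ := by
  have hint : Integrable fun η =>
      (sobolevWeight s η * ‖f η‖) * (sobolevWeight s (ξ - η) * ‖g (ξ - η)‖) :=
    hf.integrable_mul (hg.comp_measurePreserving (Measure.measurePreserving_sub_left volume ξ))
  have hweight (η : ℝ) :
      sobolevWeight s ξ ≤ 2 ^ (s / 2) * (sobolevWeight s η * sobolevWeight s (ξ - η)) := by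
    simpa only [add_sub_cancel] using sobolevWeight_add_le hs η (ξ - η)
  simp only [convolution_mul]
  calc sobolevWeight s ξ * ‖∫ η, f η * g (ξ - η)‖
      ≤ sobolevWeight s ξ * ∫ η, ‖f η * g (ξ - η)‖ :=
        mul_le_mul_of_nonneg_left (norm_integral_le_integral_norm _) (sobolevWeight_nonneg s ξ)
    _ = ∫ η, sobolevWeight s ξ * ‖f η * g (ξ - η)‖ := (integral_const_mul _ _).symm
    _ ≤ ∫ η, 2 ^ (s / 2) *
          ((sobolevWeight s η * ‖f η‖) * (sobolevWeight s (ξ - η) * ‖g (ξ - η)‖)) := by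
        refine integral_mono_of_nonneg
          (.of_forall fun η => mul_nonneg (sobolevWeight_nonneg s ξ) (norm_nonneg _))
          (hint.const_mul _) (.of_forall fun η => ?_)
        calc sobolevWeight s ξ * ‖f η * g (ξ - η)‖
            ≤ 2 ^ (s / 2) * (sobolevWeight s η * sobolevWeight s (ξ - η)) *
                ‖f η * g (ξ - η)‖ := mul_le_mul_of_nonneg_right (hweight η) (norm_nonneg _)
          _ = _ := by rw [norm_mul]; ring
    _ = _ := integral_const_mul _ _

theorem sobolevWeight_mul_norm_fourier_mul_le (hs : 0 ≤ s) (hu : MemHs s u) (hv : MemHs s v)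
    (ξ : ℝ) :
    sobolevWeight s ξ * ‖𝓕 (fun x => u x * v x) ξ‖ ≤
      2 ^ (s / 2) * (hNorm s u * hNorm s v) := by
  have hu' := hu.memLp_sobolevWeight_mul
  have hv' := hv.memLp_sobolevWeight_mul
  rw [fourier_mul_eq_convolution hu.1 (hu.memLp_fourier hs) hv.1 (hv.memLp_fourier hs)]
  refine (sobolevWeight_mul_norm_convolution_le hs hu' hv' ξ).trans ?_
  rw [hNorm_eq_sqrt_integral_sobolevWeight, hNorm_eq_sqrt_integral_sobolevWeight]
  gcongr
  exact convolution_mul_le_sqrt_mul_sqrt hu' hv' ξ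

end SobolevNorm

section Multiplier

theorem multHNorm_le_of_forall_le {s K : ℝ} {m g : ℝ → ℂ} (hm : MemLp m 2)
    (hg : ∀ ξ, sobolevWeight s ξ * ‖𝓕 g ξ‖ ≤ K) :
    multHNorm s m g ≤ √((2 * π)⁻¹ * ∫ k, ‖m k‖ ^ 2) * K := by
  have hK : 0 ≤ K := (mul_nonneg (sobolevWeight_nonneg s 0) (norm_nonneg _)).trans (hg 0)
  have hm_sq : Integrable fun ξ => ‖m (2 * π * ξ)‖ ^ 2 :=
    (hm.integrable_norm_pow two_ne_zero).comp_mul_left' (by positivity)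
  have hscale : ∫ ξ, ‖m (2 * π * ξ)‖ ^ 2 = (2 * π)⁻¹ * ∫ k, ‖m k‖ ^ 2 := by
    rw [Measure.integral_comp_mul_left (fun k => ‖m k‖ ^ 2), abs_of_pos (by positivity),
      smul_eq_mul]
  rw [← sqrt_sq hK, ← sqrt_mul (by positivity), ← hscale, ← integral_mul_const]
  refine sqrt_le_sqrt (integral_mono_of_nonneg (.of_forall fun ξ => by positivity)
    (hm_sq.mul_const _) (.of_forall fun ξ => ?_))
  calc (1 + (2 * π * ξ) ^ 2) ^ s * ‖m (2 * π * ξ) * 𝓕 g ξ‖ ^ 2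
      = ‖m (2 * π * ξ)‖ ^ 2 * (sobolevWeight s ξ * ‖𝓕 g ξ‖) ^ 2 := by
        rw [← sobolevWeight_sq, norm_mul]
        ring
    _ ≤ ‖m (2 * π * ξ)‖ ^ 2 * K ^ 2 := by
        have hweight_nonneg := sobolevWeight_nonneg s ξ
        gcongr
        exact hg ξ

theorem memLp_abs_div_one_add_sq : MemLp (fun k : ℝ => |k| / (1 + k ^ 2)) 2 := by
  have hmeas : AEStronglyMeasurable fun k : ℝ => |k| / (1 + k ^ 2) :=
    (by fun_prop : Measurable _).aestronglyMeasurable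
  rw [memLp_two_iff_integrable_sq hmeas]
  refine integrable_inv_one_add_sq.mono' (hmeas.pow 2) (.of_forall fun k => ?_)
  rw [norm_of_nonneg (by positivity), div_pow, sq_abs, inv_eq_one_div,
    div_le_div_iff₀ (by positivity) (by positivity)]
  nlinarith [sq_nonneg k]

end Multiplier

theorem sharp_bilinear_estimate_general {s : ℝ} (hs : 0 ≤ s) {m : ℝ → ℂ} (hm : MemLp m 2) :
    ∃ C > 0, ∀ u v : ℝ → ℂ, MemHs s u → MemHs s v →
      multHNorm s m (fun x => u x * v x) ≤ C * hNorm s u * hNorm s v := by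
  set M : ℝ := √((2 * π)⁻¹ * ∫ k, ‖m k‖ ^ 2)
  refine ⟨max 1 (M * 2 ^ (s / 2)), by positivity, fun u v hu hv => ?_⟩
  have huv_nonneg : 0 ≤ hNorm s u * hNorm s v := mul_nonneg (sqrt_nonneg _) (sqrt_nonneg _)
  calc multHNorm s m (fun x => u x * v x) ≤ M * (2 ^ (s / 2) * (hNorm s u * hNorm s v)) :=
        multHNorm_le_of_forall_le hm (sobolevWeight_mul_norm_fourier_mul_le hs hu hv)
    _ = M * 2 ^ (s / 2) * (hNorm s u * hNorm s v) := (mul_assoc _ _ _).symm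
    _ ≤ max 1 (M * 2 ^ (s / 2)) * (hNorm s u * hNorm s v) := by
        gcongr
        exact le_max_right _ _
    _ = max 1 (M * 2 ^ (s / 2)) * hNorm s u * hNorm s v := (mul_assoc _ _ _).symm

/-- **Sharp bilinear estimate**: `‖ω(∂ₓ)(uv)‖_{Hˢ} ≤ C ‖u‖_{Hˢ} ‖v‖_{Hˢ}` for `s ≥ 0`,
where `ω(k) = |k|/(1+k²)`. -/
theorem sharp_bilinear_estimate (s : ℝ) (hs : 0 ≤ s) :
    ∃ C > 0, ∀ u v : ℝ → ℂ, MemHs s u → MemHs s v →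
      multHNorm s (fun k : ℝ => ((|k| / (1 + k ^ 2) : ℝ) : ℂ)) (fun x => u x * v x) ≤
        C * hNorm s u * hNorm s v := by
  exact sharp_bilinear_estimate_general hs memLp_abs_div_one_add_sq.ofReal
end
end

section
/- Trilinear estimate: let γ1 > 0 and δ1 > 0 be real constants. For every s ≥ 1/6 there is a constant C = C_s > 0 such that for all η ∈ H^s(ℝ), ‖ψ(∂_x)(η³)‖_{H^s} ≤ C ‖η‖_{H^s}³, where ψ(∂_x) is the Fourier multiplier operator with symbol ψ(ξ) = ξ/(1 + γ1ξ² + δ1ξ⁴). -/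
noncomputable section
open MeasureTheory Real Set
open scoped FourierTransform

/-!
A multiplier `m` with `|m k|² ≤ c (1 + k²)^(-a)`, `a > 1`, gains more than one derivative. For
`s < a - 1/2` it makes the weight `(1 + k²)ˢ |m k|²` integrable, so only the sup norm of the Fourier
transform of `ηⁿ` matters; that is at most the `L¹` norm of `ηⁿ`, and `Hˢ ⊆ Lⁿ` by Sobolev's
inequality as soon as `s ≥ 1/2 - 1/n`. For `s > 1/2` the space `Hˢ` is an algebra and `m` is bounded
on it. The two ranges cover all `s ≥ 1/2 - 1/n`; the symbol `ψ` has `a = 3`, and `n = 3` gives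
`s ≥ 1/6`.

Sobolev's inequality at the critical exponent is obtained level by level: the frequencies
`|ξ| ≤ R(t)` contribute at most `t` to `|f|`, where `R(t)` is a power of `t`, so `{|f| > 2t}` is
estimated through the `L²` norm of the frequencies `|ξ| > R(t)`, and integrating over `t` recovers
the homogeneous Sobolev norm. The function `η` is only known to be integrable, so Plancherel's
theorem is transferred to it by testing against Schwartz functions.
-/

open scoped ENNReal SchwartzMap

/-! ### The Fourier transform of integrable functions -/

section Fourier

variable {E F : Type*} [NormedAddCommGroup E] [InnerProductSpace ℝ E] [FiniteDimensional ℝ E]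
  [MeasurableSpace E] [BorelSpace E]

section NormedSpace

variable [NormedAddCommGroup F] [NormedSpace ℂ F]

theorem enorm_fourier_le_lintegral_enorm (f : E → F) (ξ : E) : ‖𝓕 f ξ‖ₑ ≤ ∫⁻ x, ‖f x‖ₑ := by
  rw [Real.fourier_eq]
  refine (enorm_integral_le_lintegral_enorm _).trans_eq (lintegral_congr fun x => ?_)
  simp only [← ofReal_norm, Circle.norm_smul]

theorem enorm_fourierInv_le_lintegral_enorm (f : E → F) (x : E) :
    ‖𝓕⁻ f x‖ₑ ≤ ∫⁻ ξ, ‖f ξ‖ₑ := by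
  rw [Real.fourierInv_eq_fourier_neg]
  exact enorm_fourier_le_lintegral_enorm f (-x)

theorem norm_fourierInv_le_integral_norm (f : E → F) (x : E) : ‖𝓕⁻ f x‖ ≤ ∫ ξ, ‖f ξ‖ :=
  VectorFourier.norm_fourierIntegral_le_integral_norm _ _ _ f x

theorem continuous_fourier {f : E → F} (hf : Integrable f) : Continuous (𝓕 f) :=
  VectorFourier.fourierIntegral_continuous Real.continuous_fourierChar continuous_inner hf

theorem continuous_fourierInv {f : E → F} (hf : Integrable f) : Continuous (𝓕⁻ f) := by
  rw [Real.fourierInv_eq_fourier_comp_neg]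
  exact continuous_fourier hf.comp_neg

theorem integral_fourier_smul_eq [CompleteSpace F] {φ : E → ℂ} {f : E → F} (hφ : Integrable φ)
    (hf : Integrable f) : ∫ ξ, 𝓕 φ ξ • f ξ = ∫ x, φ x • 𝓕 f x := by
  have h := VectorFourier.integral_fourierIntegral_smul_eq_flip (L := innerₗ E) (μ := volume)
    (ν := volume) Real.continuous_fourierChar continuous_inner hφ hf
  rwa [flip_innerₗ] at h

theorem integral_fourierInv_smul_eq [CompleteSpace F] {φ : E → ℂ} {f : E → F}
    (hφ : Integrable φ) (hf : Integrable f) : ∫ x, 𝓕⁻ φ x • f x = ∫ ξ, φ ξ • 𝓕⁻ f ξ := by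
  have h := VectorFourier.integral_fourierIntegral_smul_eq_flip (L := -innerₗ E) (μ := volume)
    (ν := volume) Real.continuous_fourierChar continuous_inner.neg hφ hf
  have hflip : LinearMap.flip (-innerₗ E) = -innerₗ E := by
    ext x y
    simp [real_inner_comm]
  rwa [hflip] at h

theorem integrable_schwartz_smul {p : ℝ≥0∞} (hp : 1 ≤ p) (φ : 𝓢(E, ℂ)) {w : E → F}
    (hw : MemLp w p) : Integrable fun x => φ x • w x := by
  have := ENNReal.HolderConjugate.inv_one_sub_inv' hp
  exact memLp_one_iff_integrable.1 (hw.smul (φ.memLp (1 - p⁻¹)⁻¹))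

end NormedSpace

variable [NormedAddCommGroup F] [InnerProductSpace ℂ F] [CompleteSpace F]

theorem integral_schwartz_smul_fourierInv_Lp_eq (φ : 𝓢(E, ℂ)) (g : Lp F 2 (volume : Measure E)) :
    ∫ x, φ x • (𝓕⁻ g : Lp F 2 (volume : Measure E)) x = ∫ ξ, 𝓕⁻ φ ξ • g ξ := by
  have h := congrArg (· φ) (Lp.fourierInv_toTemperedDistribution_eq g)
  simpa using h.symm

-- Both sides pair identically with Schwartz functions, so they agree as tempered distributions.
theorem ae_eq_fourierInv_add_fourierInv_toLp {f u : E → F} (hf : Integrable f)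
    (hu : Integrable u) (hv : MemLp (𝓕 f - u) 2) :
    f =ᵐ[volume] 𝓕⁻ u + (𝓕⁻ hv.toLp : Lp F 2 (volume : Measure E)) := by
  set h : Lp F 2 (volume : Measure E) := 𝓕⁻ hv.toLp
  have hloc : LocallyIntegrable h := (Lp.memLp h).locallyIntegrable (by norm_num)
  refine ae_eq_of_integral_contDiff_smul_eq hf.locallyIntegrable
    ((continuous_fourierInv hu).locallyIntegrable.add hloc) fun g hg hgc => ?_
  let φ : 𝓢(E, ℂ) := (hgc.comp_left (g := Complex.ofRealCLM) rfl).toSchwartzMap (by fun_prop)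
  have hφ (w : E → F) : ∫ x, g x • w x = ∫ x, φ x • w x := by simp [φ]
  have hLp (ψ : 𝓢(E, ℂ)) (w : Lp F 2 (volume : Measure E)) : Integrable fun x => ψ x • w x :=
    integrable_schwartz_smul (by norm_num) ψ (Lp.memLp w)
  have hu' : MemLp (𝓕⁻ u) ∞ := memLp_top_of_bound (continuous_fourierInv hu).aestronglyMeasurable _
    (.of_forall (norm_fourierInv_le_integral_norm u))
  rw [hφ, hφ]
  calc ∫ x, φ x • f x = ∫ x, 𝓕 (𝓕⁻ φ) x • f x := by rw [FourierTransform.fourier_fourierInv_eq]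
    _ = ∫ ξ, 𝓕⁻ φ ξ • 𝓕 f ξ := by
        simpa only [SchwartzMap.fourier_coe] using integral_fourier_smul_eq (𝓕⁻ φ).integrable hf
    _ = ∫ ξ, (𝓕⁻ φ ξ • u ξ + 𝓕⁻ φ ξ • (hv.toLp : E → F) ξ) := by
        refine integral_congr_ae ?_
        filter_upwards [hv.coeFn_toLp] with ξ hξ
        rw [hξ, ← smul_add, Pi.sub_apply, add_sub_cancel]
    _ = (∫ ξ, 𝓕⁻ φ ξ • u ξ) + ∫ ξ, 𝓕⁻ φ ξ • (hv.toLp : E → F) ξ :=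
        integral_add (integrable_schwartz_smul le_rfl _ (memLp_one_iff_integrable.2 hu))
          (hLp _ _)
    _ = (∫ x, φ x • 𝓕⁻ u x) + ∫ x, φ x • h x := by
        rw [integral_schwartz_smul_fourierInv_Lp_eq, SchwartzMap.fourierInv_coe,
          integral_fourierInv_smul_eq φ.integrable hu]
    _ = ∫ x, (φ x • 𝓕⁻ u x + φ x • h x) :=
        (integral_add (integrable_schwartz_smul le_top φ hu') (hLp _ _)).symm
    _ = _ := by simp only [Pi.add_apply, smul_add]

theorem ae_eq_fourierInv_fourier {f : E → F} (hf : Integrable f) (hF : Integrable (𝓕 f)) :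
    f =ᵐ[volume] 𝓕⁻ (𝓕 f) := by
  have hv : MemLp (𝓕 f - 𝓕 f) 2 := by simp
  have hv₀ : hv.toLp = 0 := (MemLp.toLp_congr hv .zero (by simp)).trans (MemLp.toLp_zero _)
  have h := ae_eq_fourierInv_add_fourierInv_toLp hf hF hv
  rw [hv₀, FourierTransform.fourierInv_zero] at h
  filter_upwards [h, Lp.coeFn_zero F 2 volume] with x hx hx₀
  rw [hx, Pi.add_apply, hx₀, Pi.zero_apply, add_zero]

theorem fourier_smul_eq_integral {f : E → ℂ} {g : E → F} (hf : Integrable f) (hg : Integrable g)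
    (hG : Integrable (𝓕 g)) (ζ : E) :
    𝓕 (fun x => f x • g x) ζ = ∫ ξ, 𝓕 f (ζ - ξ) • 𝓕 g ξ := by
  let φ : E → ℂ := fun x => 𝐞 (-inner ℝ x ζ) • f x
  have hφ : Integrable φ := (Real.fourierIntegral_convergent_iff ζ).2 hf
  have hφ_inv (ξ : E) : 𝓕⁻ φ ξ = 𝓕 f (ζ - ξ) := by
    rw [Real.fourierInv_eq, Real.fourier_eq]
    refine integral_congr_ae (.of_forall fun x => ?_)
    simp only [φ, smul_smul, ← AddChar.map_add_eq_mul, inner_sub_right]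
    congr 2
    ring
  calc 𝓕 (fun x => f x • g x) ζ = ∫ x, φ x • 𝓕⁻ (𝓕 g) x := by
        rw [Real.fourier_eq]
        refine integral_congr_ae ?_
        filter_upwards [ae_eq_fourierInv_fourier hg hG] with x hx
        rw [← hx, smul_assoc]
    _ = ∫ ξ, 𝓕 f (ζ - ξ) • 𝓕 g ξ := by
        simp only [← integral_fourierInv_smul_eq hφ hG, hφ_inv]

theorem sq_mul_volume_lt_enorm_le_eLpNorm_sq {f u : E → F} (hf : Integrable f)
    (hu : Integrable u) (hv : MemLp (𝓕 f - u) 2) {t : ℝ≥0∞} (hut : ∀ x, ‖𝓕⁻ u x‖ₑ ≤ t) :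
    t ^ 2 * volume {x | 2 * t < ‖f x‖ₑ} ≤ eLpNorm (𝓕 f - u) 2 ^ 2 := by
  obtain ⟨h, hfh, hnorm⟩ : ∃ h : Lp F 2 (volume : Measure E),
      f =ᵐ[volume] 𝓕⁻ u + h ∧ ‖h‖ₑ = eLpNorm (𝓕 f - u) 2 := by
    refine ⟨𝓕⁻ hv.toLp, ae_eq_fourierInv_add_fourierInv_toLp hf hu hv, ?_⟩
    rw [← Lp.enorm_toLp hv, ← ofReal_norm, ← ofReal_norm, ← Lp.norm_fourier_eq (𝓕⁻ hv.toLp),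
      FourierTransform.fourier_fourierInv_eq]
  have hsub : {x | 2 * t < ‖f x‖ₑ} ≤ᵐ[volume] {x | t ≤ ‖h x‖ₑ} := by
    filter_upwards [hfh] with x hx
    refine fun hlt : 2 * t < ‖f x‖ₑ => show t ≤ ‖h x‖ₑ from le_of_not_gt fun hlt' => ?_
    refine hlt.not_ge ?_
    rw [hx, two_mul]
    exact (enorm_add_le _ _).trans (add_le_add (hut x) hlt'.le)
  have hcheb : t ^ 2 * volume {x | t ≤ ‖h x‖ₑ} ≤ ‖h‖ₑ ^ 2 := by
    simpa [Lp.enorm_def] using mul_meas_ge_le_pow_eLpNorm' volume two_ne_zero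
      ENNReal.ofNat_ne_top (Lp.aestronglyMeasurable h) t
  rw [← hnorm]
  exact (mul_le_mul_right (measure_mono_ae hsub) _).trans hcheb

-- Truncating `𝓕 f` to `S` leaves a part of `f` bounded by `t` and an `L²` part controlled by
-- Plancherel, to which Chebyshev's inequality applies.
theorem sq_mul_volume_lt_enorm_le_setLIntegral_compl {f : E → F} (hf : Integrable f) {S : Set E}
    (hS : MeasurableSet S) {t : ℝ≥0∞} (ht : t ≠ ∞) (hft : ∫⁻ ξ in S, ‖𝓕 f ξ‖ₑ ≤ t) :
    t ^ 2 * volume {x | 2 * t < ‖f x‖ₑ} ≤ ∫⁻ ξ in Sᶜ, ‖𝓕 f ξ‖ₑ ^ 2 := by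
  obtain hfin | hfin := eq_or_ne (∫⁻ ξ in Sᶜ, ‖𝓕 f ξ‖ₑ ^ 2) ∞
  · simp [hfin]
  have hF : AEStronglyMeasurable (𝓕 f) volume := (continuous_fourier hf).aestronglyMeasurable
  have hu : Integrable (S.indicator (𝓕 f)) :=
    (integrable_indicator_iff hS).2 ⟨hF.restrict, hft.trans_lt ht.lt_top⟩
  have hv_norm : eLpNorm (𝓕 f - S.indicator (𝓕 f)) 2 ^ 2 = ∫⁻ ξ in Sᶜ, ‖𝓕 f ξ‖ₑ ^ 2 := by
    rw [← indicator_compl, eLpNorm_indicator_eq_eLpNorm_restrict hS.compl]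
    simpa using eLpNorm_nnreal_pow_eq_lintegral (p := 2) (f := 𝓕 f) (μ := volume.restrict Sᶜ)
      two_ne_zero
  have hv : MemLp (𝓕 f - S.indicator (𝓕 f)) 2 :=
    ⟨hF.sub hu.1, lt_top_iff_ne_top.2 fun h => hfin (by rw [← hv_norm, h]; simp)⟩
  rw [← hv_norm]
  refine sq_mul_volume_lt_enorm_le_eLpNorm_sq hf hu hv fun x => ?_
  calc ‖𝓕⁻ (S.indicator (𝓕 f)) x‖ₑ ≤ ∫⁻ ξ, ‖S.indicator (𝓕 f) ξ‖ₑ :=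
        enorm_fourierInv_le_lintegral_enorm _ x
    _ = ∫⁻ ξ in S, ‖𝓕 f ξ‖ₑ := by
        simp only [enorm_indicator_eq_indicator_enorm, lintegral_indicator hS]
    _ ≤ t := hft

end Fourier

/-! ### Sobolev embedding on the line -/

-- Cauchy–Schwarz for the factorization `f = w ^ (-1 / 2) * (w ^ (1 / 2) * f)`.
theorem sq_lintegral_le_lintegral_inv_mul {α : Type*} [MeasurableSpace α] {μ : Measure α}
    {w f : α → ℝ≥0∞} (hw : AEMeasurable w μ) (hf : AEMeasurable f μ) (hw₀ : ∀ᵐ x ∂μ, w x ≠ 0)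
    (hw_top : ∀ᵐ x ∂μ, w x ≠ ∞) :
    (∫⁻ x, f x ∂μ) ^ 2 ≤ (∫⁻ x, (w x)⁻¹ ∂μ) * ∫⁻ x, w x * f x ^ 2 ∂μ := by
  have h := ENNReal.lintegral_mul_le_Lp_mul_Lq μ .two_two (hw.pow_const (-(1 / 2) : ℝ))
    ((hw.pow_const (1 / 2 : ℝ)).mul hf)
  have hfac : ∫⁻ x, f x ∂μ = ∫⁻ x, w x ^ (-(1 / 2) : ℝ) * (w x ^ (1 / 2 : ℝ) * f x) ∂μ := by
    refine lintegral_congr_ae ?_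
    filter_upwards [hw₀, hw_top] with x hx₀ hx
    rw [← mul_assoc, ← ENNReal.rpow_add _ _ hx₀ hx, neg_add_cancel, ENNReal.rpow_zero, one_mul]
  have hpow (r : ℝ) (x : α) : (w x ^ r) ^ 2 = w x ^ (r * 2) := by
    exact_mod_cast (ENNReal.rpow_mul_natCast (w x) r 2).symm
  rw [hfac]
  refine (pow_le_pow_left' h 2).trans_eq ?_
  simp only [Pi.mul_apply, ENNReal.rpow_two, mul_pow, hpow, ← ENNReal.rpow_mul_natCast]
  norm_num [ENNReal.rpow_neg_one]

theorem lintegral_comp_abs (f : ℝ → ℝ≥0∞) : ∫⁻ x, f |x| = 2 * ∫⁻ x in Ioi 0, f x := by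
  have h₁ : ∫⁻ x in Ioi 0, f |x| = ∫⁻ x in Ioi 0, f x :=
    setLIntegral_congr_fun measurableSet_Ioi fun x hx => by rw [abs_of_pos hx]
  have h₂ : ∫⁻ x in Iio 0, f |x| = ∫⁻ x in Ioi 0, f x := by
    rw [← h₁, ← (Measure.measurePreserving_neg volume).setLIntegral_comp_preimage_emb
      (MeasurableEquiv.neg ℝ).measurableEmbedding]
    simp
  rw [← lintegral_add_compl _ (measurableSet_Ioi (a := (0 : ℝ))), compl_Ioi,
    ← restrict_Iio_eq_restrict_Iic, h₁, h₂, two_mul]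

theorem setLIntegral_abs_le_rpow {r R : ℝ} (hr : -1 < r) (hR : 0 ≤ R) :
    ∫⁻ x in {x | |x| ≤ R}, ENNReal.ofReal (|x| ^ r) =
      ENNReal.ofReal (2 * R ^ (r + 1) / (r + 1)) := by
  have hint : IntegrableOn (fun t : ℝ => t ^ r) (Ioc 0 R) :=
    (intervalIntegral.intervalIntegrable_rpow' hr).1
  have hS : MeasurableSet {x : ℝ | |x| ≤ R} := measurableSet_le (by fun_prop) (by fun_prop)
  calc ∫⁻ x in {x | |x| ≤ R}, ENNReal.ofReal (|x| ^ r)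
      = ∫⁻ x : ℝ, (Iic R).indicator (fun t => ENNReal.ofReal (t ^ r)) |x| := by
        rw [← lintegral_indicator hS]
        rfl
    _ = 2 * ∫⁻ t in Ioc 0 R, ENNReal.ofReal (t ^ r) := by
        rw [lintegral_comp_abs, setLIntegral_indicator measurableSet_Iic, inter_comm, Ioi_inter_Iic]
    _ = 2 * ENNReal.ofReal (R ^ (r + 1) / (r + 1)) := by
        rw [← ofReal_integral_eq_lintegral_ofReal hint
          ((ae_restrict_mem measurableSet_Ioc).mono fun t ht => rpow_nonneg ht.1.le _),
          ← intervalIntegral.integral_of_le hR, integral_rpow (Or.inl hr),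
          zero_rpow (by linarith), sub_zero]
    _ = _ := by rw [mul_div_assoc, ENNReal.ofReal_mul zero_le_two, ENNReal.ofReal_ofNat]

theorem sq_setLIntegral_abs_le_le {g : ℝ → ℝ≥0∞} (hg : AEMeasurable g) {θ R : ℝ} (hθ : 0 < θ)
    (hR : 0 ≤ R) :
    (∫⁻ ξ in {ξ | |ξ| ≤ R}, g ξ) ^ 2 ≤
      ENNReal.ofReal (2 * R ^ θ / θ) * ∫⁻ ξ, ENNReal.ofReal (|ξ| ^ (1 - θ)) * g ξ ^ 2 := by
  have hinv : ∀ᵐ ξ : ℝ, (ENNReal.ofReal (|ξ| ^ (1 - θ)))⁻¹ = ENNReal.ofReal (|ξ| ^ (θ - 1)) := by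
    filter_upwards [Measure.ae_ne volume 0] with ξ hξ
    have hξ' := abs_pos.2 hξ
    rw [← ENNReal.ofReal_inv_of_pos (by positivity), ← rpow_neg hξ'.le, neg_sub]
  have hpos : ∀ᵐ ξ : ℝ, ENNReal.ofReal (|ξ| ^ (1 - θ)) ≠ 0 := by
    filter_upwards [Measure.ae_ne volume 0] with ξ hξ
    have := abs_pos.2 hξ
    exact (ENNReal.ofReal_pos.2 (by positivity)).ne'
  calc _ ≤ (∫⁻ ξ in {ξ | |ξ| ≤ R}, (ENNReal.ofReal (|ξ| ^ (1 - θ)))⁻¹) *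
        ∫⁻ ξ in {ξ | |ξ| ≤ R}, ENNReal.ofReal (|ξ| ^ (1 - θ)) * g ξ ^ 2 :=
        sq_lintegral_le_lintegral_inv_mul (by fun_prop) hg.restrict (ae_restrict_of_ae hpos)
          (.of_forall fun _ => ENNReal.ofReal_ne_top)
    _ ≤ _ := by
        rw [lintegral_congr_ae (ae_restrict_of_ae hinv), setLIntegral_abs_le_rpow (by linarith) hR,
          sub_add_cancel]
        gcongr
        exact Measure.restrict_le_self

theorem lintegral_rpow_mul_eq_lintegral_setLIntegral_lt {α : Type*} [MeasurableSpace α]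
    {μ : Measure α} {T : α → ℝ} (hT : Measurable T) (hT₀ : 0 ≤ T) {g : α → ℝ≥0∞}
    (hg : Measurable g) {q : ℝ} (hq : 0 < q) :
    ∫⁻ x, ENNReal.ofReal (T x ^ q) * g x ∂μ =
      ENNReal.ofReal q *
        ∫⁻ τ in Ioi 0, (∫⁻ x in {x | τ < T x}, g x ∂μ) * ENNReal.ofReal (τ ^ (q - 1)) := by
  have h := lintegral_rpow_eq_lintegral_meas_lt_mul (μ.withDensity g) (.of_forall hT₀)
    hT.aemeasurable hq
  rw [lintegral_withDensity_eq_lintegral_mul _ hg (by fun_prop)] at h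
  simpa only [Pi.mul_apply, mul_comm (g _),
    withDensity_apply g (measurableSet_lt measurable_const hT)] using h

theorem lintegral_setLIntegral_lt_mul_rpow_le {p c a : ℝ} (hp : 2 < p) (hc : 0 ≤ c)
    {g : ℝ → ℝ≥0∞} (hg : Measurable g)
    (hga : ∫⁻ ξ, ENNReal.ofReal (|ξ| ^ (1 - 2 / p)) * g ξ ≤ ENNReal.ofReal a) :
    ∫⁻ τ in Ioi 0, (∫⁻ ξ in {ξ | τ < c * |ξ| ^ p⁻¹}, g ξ) * ENNReal.ofReal (τ ^ (p - 2 - 1)) ≤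
      ENNReal.ofReal (c ^ (p - 2) * a / (p - 2)) := by
  have hp₀ : p ≠ 0 := by linarith
  have hp₂ : 0 < p - 2 := by linarith
  have hc' : 0 ≤ c ^ (p - 2) := by positivity
  have hT (ξ : ℝ) : (c * |ξ| ^ p⁻¹) ^ (p - 2) = c ^ (p - 2) * |ξ| ^ (1 - 2 / p) := by
    rw [mul_rpow hc (by positivity), ← rpow_mul (abs_nonneg ξ), mul_sub, inv_mul_cancel₀ hp₀,
      inv_mul_eq_div]
  rw [ENNReal.ofReal_div_of_pos hp₂, ENNReal.ofReal_mul hc',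
    ENNReal.le_div_iff_mul_le (by simp [hp]) (by simp), mul_comm,
    ← lintegral_rpow_mul_eq_lintegral_setLIntegral_lt (by fun_prop) (fun ξ => by positivity) hg hp₂]
  simp only [hT, ENNReal.ofReal_mul hc', mul_assoc]
  rw [lintegral_const_mul' _ _ ENNReal.ofReal_ne_top]
  gcongr

section Sobolev

variable {F : Type*} [NormedAddCommGroup F] [InnerProductSpace ℂ F] [CompleteSpace F]

-- The splitting frequency `(τ / c) ^ p` is chosen so that the low frequencies contribute at most
-- `τ / 2` to the supremum norm.
theorem ofReal_sq_mul_volume_lt_norm_le {p a c : ℝ} (hp : 0 < p) (hc : 0 < c)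
    (hca : c ^ 2 = 4 * p * a) {f : ℝ → F} (hf : Integrable f)
    (hfa : ∫⁻ ξ, ENNReal.ofReal (|ξ| ^ (1 - 2 / p)) * ‖𝓕 f ξ‖ₑ ^ 2 ≤ ENNReal.ofReal a)
    {τ : ℝ} (hτ : 0 < τ) :
    ENNReal.ofReal (τ ^ 2) * volume {x | τ < ‖f x‖} ≤
      4 * ∫⁻ ξ in {ξ | τ < c * |ξ| ^ p⁻¹}, ‖𝓕 f ξ‖ₑ ^ 2 := by
  have hR : 0 ≤ (τ / c) ^ p := by positivity
  have hS : MeasurableSet {ξ : ℝ | |ξ| ≤ (τ / c) ^ p} :=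
    measurableSet_le (by fun_prop) (by fun_prop)
  have hSc : {ξ : ℝ | |ξ| ≤ (τ / c) ^ p}ᶜ = {ξ | τ < c * |ξ| ^ p⁻¹} := by
    ext ξ
    rw [mem_compl_iff, mem_ofPred_eq, mem_ofPred_eq, not_le,
      ← lt_rpow_inv_iff_of_pos (by positivity) (abs_nonneg ξ) hp, div_lt_iff₀' hc]
  have hlow : ∫⁻ ξ in {ξ | |ξ| ≤ (τ / c) ^ p}, ‖𝓕 f ξ‖ₑ ≤ ENNReal.ofReal (τ / 2) := by
    refine (ENNReal.pow_le_pow_left_iff two_ne_zero).1 ?_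
    calc _ ≤ ENNReal.ofReal (2 * ((τ / c) ^ p) ^ (2 / p) / (2 / p)) * ENNReal.ofReal a := by
          refine (sq_setLIntegral_abs_le_le (continuous_fourier hf).enorm.aemeasurable
            (div_pos two_pos hp) hR).trans ?_
          gcongr
      _ = ENNReal.ofReal (τ / 2) ^ 2 := by
          rw [← ENNReal.ofReal_mul (by positivity), ← ENNReal.ofReal_pow (by positivity),
            ← rpow_mul (by positivity), mul_div_cancel₀ _ hp.ne', rpow_two]
          have ha : a = c ^ 2 / (4 * p) := by rw [hca]; field_simp
          congr 1
          rw [ha]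
          field_simp
          norm_num
  have h := sq_mul_volume_lt_enorm_le_setLIntegral_compl hf hS ENNReal.ofReal_ne_top hlow
  have hset : {x | 2 * ENNReal.ofReal (τ / 2) < ‖f x‖ₑ} = {x | τ < ‖f x‖} := by
    ext x
    rw [mem_ofPred_eq, mem_ofPred_eq, ← ENNReal.ofReal_ofNat, ← ENNReal.ofReal_mul zero_le_two,
      mul_div_cancel₀ _ two_ne_zero, ← ofReal_norm, ENNReal.ofReal_lt_ofReal_iff_of_nonneg hτ.le]
  rw [hset, hSc] at h
  calc ENNReal.ofReal (τ ^ 2) * volume {x | τ < ‖f x‖}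
      = 4 * (ENNReal.ofReal (τ / 2) ^ 2 * volume {x | τ < ‖f x‖}) := by
        rw [← mul_assoc, ← ENNReal.ofReal_pow (by positivity), ← ENNReal.ofReal_ofNat,
          ← ENNReal.ofReal_mul (by norm_num)]
        ring_nf
    _ ≤ _ := by gcongr

theorem volume_lt_norm_mul_rpow_le {p a c : ℝ} (hp : 0 < p) (hc : 0 < c)
    (hca : c ^ 2 = 4 * p * a) {f : ℝ → F} (hf : Integrable f)
    (hfa : ∫⁻ ξ, ENNReal.ofReal (|ξ| ^ (1 - 2 / p)) * ‖𝓕 f ξ‖ₑ ^ 2 ≤ ENNReal.ofReal a)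
    {τ : ℝ} (hτ : 0 < τ) :
    volume {x | τ < ‖f x‖} * ENNReal.ofReal (τ ^ (p - 1)) ≤
      4 * ((∫⁻ ξ in {ξ | τ < c * |ξ| ^ p⁻¹}, ‖𝓕 f ξ‖ₑ ^ 2) *
        ENNReal.ofReal (τ ^ (p - 2 - 1))) := by
  have hpow : τ ^ (p - 1) = τ ^ 2 * τ ^ (p - 2 - 1) := by
    rw [← rpow_two, ← rpow_add hτ]
    ring_nf
  rw [hpow, ENNReal.ofReal_mul (by positivity), ← mul_assoc, ← mul_assoc, mul_comm (volume _)]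
  exact mul_le_mul_left (ofReal_sq_mul_volume_lt_norm_le hp hc hca hf hfa hτ) _

theorem lintegral_norm_rpow_le_of_lintegral_fourier_le {p a : ℝ} (hp : 2 < p) (ha : 0 < a)
    {f : ℝ → F} (hf : Integrable f)
    (hfa : ∫⁻ ξ, ENNReal.ofReal (|ξ| ^ (1 - 2 / p)) * ‖𝓕 f ξ‖ₑ ^ 2 ≤ ENNReal.ofReal a) :
    ∫⁻ x, ENNReal.ofReal (‖f x‖ ^ p) ≤ ENNReal.ofReal ((4 * p * a) ^ (p / 2) / (p - 2)) := by
  have hp₀ : 0 < p := by linarith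
  set c := √(4 * p * a)
  have hc : 0 < c := by positivity
  have hca : c ^ 2 = 4 * p * a := sq_sqrt (by positivity)
  have hL := lintegral_setLIntegral_lt_mul_rpow_le hp hc.le
    ((continuous_fourier hf).enorm.measurable.pow_const 2) hfa
  calc ∫⁻ x, ENNReal.ofReal (‖f x‖ ^ p)
      = ENNReal.ofReal p *
          ∫⁻ τ in Ioi 0, volume {x | τ < ‖f x‖} * ENNReal.ofReal (τ ^ (p - 1)) :=
        lintegral_rpow_eq_lintegral_meas_lt_mul volume (.of_forall fun x => norm_nonneg _)
          hf.1.norm.aemeasurable hp₀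
    _ ≤ ENNReal.ofReal p * (4 * ENNReal.ofReal (c ^ (p - 2) * a / (p - 2))) := by
        refine mul_le_mul_right ((setLIntegral_mono' measurableSet_Ioi fun τ hτ =>
          volume_lt_norm_mul_rpow_le hp₀ hc hca hf hfa hτ).trans ?_) _
        rw [lintegral_const_mul' _ _ ENNReal.ofNat_ne_top]
        gcongr
    _ = ENNReal.ofReal ((4 * p * a) ^ (p / 2) / (p - 2)) := by
        have hcp : (4 * p * a) ^ (p / 2) = c ^ (p - 2) * (4 * p * a) := by
          rw [← hca, ← rpow_two, ← rpow_mul hc.le, ← rpow_add hc]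
          ring_nf
        rw [hcp, ← ENNReal.ofReal_ofNat, ← ENNReal.ofReal_mul (by norm_num),
          ← ENNReal.ofReal_mul hp₀.le]
        ring_nf

theorem lintegral_enorm_rpow_le_lintegral_fourier {p : ℝ} (hp : 2 < p) {f : ℝ → F}
    (hf : Integrable f) :
    ∫⁻ x, ‖f x‖ₑ ^ p ≤ ENNReal.ofReal ((4 * p) ^ (p / 2) / (p - 2)) *
      (∫⁻ ξ, ENNReal.ofReal (|ξ| ^ (1 - 2 / p)) * ‖𝓕 f ξ‖ₑ ^ 2) ^ (p / 2) := by
  have hp₀ : 0 ≤ p / 2 := by linarith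
  have hC : 0 < (4 * p) ^ (p / 2) / (p - 2) := div_pos (by positivity) (by linarith)
  set A := ∫⁻ ξ, ENNReal.ofReal (|ξ| ^ (1 - 2 / p)) * ‖𝓕 f ξ‖ₑ ^ 2
  obtain hA | hA := eq_or_ne A ∞
  · simp [hA, hC, show 0 < p by linarith]
  have hcont : Continuous fun a => ENNReal.ofReal ((4 * p * a) ^ (p / 2) / (p - 2)) :=
    ENNReal.continuous_ofReal.comp (by fun_prop (disch := assumption))
  calc ∫⁻ x, ‖f x‖ₑ ^ p = ∫⁻ x, ENNReal.ofReal (‖f x‖ ^ p) :=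
        lintegral_congr fun x => by
          rw [← ENNReal.ofReal_rpow_of_nonneg (norm_nonneg _) (by linarith), ofReal_norm]
    _ ≤ ENNReal.ofReal ((4 * p * A.toReal) ^ (p / 2) / (p - 2)) := by
        refine ge_of_tendsto (hcont.continuousWithinAt (s := Ioi A.toReal)).tendsto ?_
        filter_upwards [self_mem_nhdsWithin] with a (ha : A.toReal < a)
        have ha₀ : 0 < a := ENNReal.toReal_nonneg.trans_lt ha
        exact lintegral_norm_rpow_le_of_lintegral_fourier_le hp ha₀ hf
          ((ENNReal.le_ofReal_iff_toReal_le hA ha₀.le).2 ha.le)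
    _ = _ := by
        rw [mul_rpow (by linarith) ENNReal.toReal_nonneg, mul_div_right_comm,
          ENNReal.ofReal_mul hC.le, ← ENNReal.ofReal_rpow_of_nonneg ENNReal.toReal_nonneg hp₀,
          ENNReal.ofReal_toReal hA]

end Sobolev

/-! ### Sobolev norms as extended weighted norms -/

/-- The `Hˢ` weight `(1 + k²)ˢ` at the frequency `k = 2πξ`, valued in `ℝ≥0∞` so that integrals
against it need no integrability conditions. -/
def hWeight (s ξ : ℝ) : ℝ≥0∞ :=
  ENNReal.ofReal ((1 + (2 * π * ξ) ^ 2) ^ s)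

/-- The square of the `Hˢ` norm of a function with Fourier transform `G`; it is `∞` when that
function is not in `Hˢ`. -/
def hENormSq (s : ℝ) (G : ℝ → ℂ) : ℝ≥0∞ :=
  ∫⁻ ξ, hWeight s ξ * ‖G ξ‖ₑ ^ 2

theorem hWeight_ne_zero (s ξ : ℝ) : hWeight s ξ ≠ 0 :=
  (ENNReal.ofReal_pos.2 (by positivity)).ne'

theorem hWeight_ne_top (s ξ : ℝ) : hWeight s ξ ≠ ∞ :=
  ENNReal.ofReal_ne_top

@[fun_prop]
theorem measurable_hWeight (s : ℝ) : Measurable (hWeight s) := by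
  unfold hWeight
  fun_prop

theorem hWeight_add (s t ξ : ℝ) : hWeight (s + t) ξ = hWeight s ξ * hWeight t ξ := by
  rw [hWeight, rpow_add (by positivity), ENNReal.ofReal_mul (by positivity), hWeight, hWeight]

theorem hWeight_neg (s ξ : ℝ) : hWeight (-s) ξ = (hWeight s ξ)⁻¹ := by
  rw [hWeight, rpow_neg (by positivity), ENNReal.ofReal_inv_of_pos (by positivity), hWeight]

theorem ofReal_abs_rpow_le_hWeight {r s : ℝ} (hr : 0 ≤ r) (hrs : r ≤ 2 * s) (ξ : ℝ) :
    ENNReal.ofReal (|ξ| ^ r) ≤ hWeight s ξ := by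
  have hle : ξ ^ 2 ≤ 1 + (2 * π * ξ) ^ 2 := by
    nlinarith [pi_gt_three, mul_nonneg (sq_nonneg ξ) (sq_nonneg (2 * π - 1))]
  refine ENNReal.ofReal_le_ofReal ?_
  calc |ξ| ^ r = (ξ ^ 2) ^ (r / 2) := by
        rw [← sq_abs, ← rpow_two, ← rpow_mul (abs_nonneg ξ), mul_div_cancel₀ _ two_ne_zero]
    _ ≤ (1 + (2 * π * ξ) ^ 2) ^ (r / 2) := by gcongr
    _ ≤ (1 + (2 * π * ξ) ^ 2) ^ s := by
        gcongr
        · exact le_add_of_nonneg_right (sq_nonneg _)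
        · linarith

theorem hWeight_add_le {s : ℝ} (hs : 0 ≤ s) (x y : ℝ) :
    hWeight s (x + y) ≤ ENNReal.ofReal (4 ^ s) * (hWeight s x + hWeight s y) := by
  wlog h : (2 * π * y) ^ 2 ≤ (2 * π * x) ^ 2 generalizing x y
  · rw [add_comm x, add_comm (hWeight s x)]
    exact this y x (le_of_not_ge h)
  calc hWeight s (x + y) ≤ ENNReal.ofReal ((4 * (1 + (2 * π * x) ^ 2)) ^ s) := by
        unfold hWeight
        gcongr
        nlinarith [sq_nonneg (2 * π * x - 2 * π * y)]
    _ = ENNReal.ofReal (4 ^ s) * hWeight s x := by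
        rw [mul_rpow (by norm_num) (by positivity), ENNReal.ofReal_mul (by positivity), hWeight]
    _ ≤ _ := by
        gcongr
        exact le_self_add

theorem lintegral_hWeight_neg_ne_top {s : ℝ} (hs : 1 / 2 < s) : ∫⁻ ξ, hWeight (-s) ξ ≠ ∞ := by
  have h : Integrable fun ξ : ℝ => (1 + ‖ξ‖ ^ 2) ^ (-(2 * s) / 2) :=
    integrable_rpow_neg_one_add_norm_sq (by rw [Module.finrank_self]; push_cast; linarith)
  have h' := h.comp_mul_left' (by positivity : 2 * π ≠ 0)
  simp only [norm_eq_abs, sq_abs] at h'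
  rw [show -(2 * s) / 2 = -s by ring] at h'
  exact h'.lintegral_lt_top.ne

theorem ofReal_weight_mul_sq_norm (s : ℝ) (G : ℝ → ℂ) (ξ : ℝ) :
    ENNReal.ofReal ((1 + (2 * π * ξ) ^ 2) ^ s * ‖G ξ‖ ^ 2) = hWeight s ξ * ‖G ξ‖ₑ ^ 2 := by
  rw [ENNReal.ofReal_mul (by positivity), ENNReal.ofReal_pow (norm_nonneg _), ofReal_norm, hWeight]

theorem aestronglyMeasurable_weight_mul_sq_norm (s : ℝ) {G : ℝ → ℂ}
    (hG : AEStronglyMeasurable G) :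
    AEStronglyMeasurable fun ξ : ℝ => (1 + (2 * π * ξ) ^ 2) ^ s * ‖G ξ‖ ^ 2 :=
  AEStronglyMeasurable.mul (Measurable.aestronglyMeasurable (by fun_prop)) (hG.norm.pow 2)

theorem integrable_weight_mul_sq_norm_iff {s : ℝ} {G : ℝ → ℂ} (hG : AEStronglyMeasurable G) :
    Integrable (fun ξ : ℝ => (1 + (2 * π * ξ) ^ 2) ^ s * ‖G ξ‖ ^ 2) ↔ hENormSq s G ≠ ∞ := by
  rw [← lintegral_ofReal_ne_top_iff_integrable (aestronglyMeasurable_weight_mul_sq_norm s hG)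
    (.of_forall fun ξ => by positivity)]
  simp only [ofReal_weight_mul_sq_norm, hENormSq]

theorem integral_weight_mul_sq_norm_eq {s : ℝ} {G : ℝ → ℂ} (hG : AEStronglyMeasurable G) :
    ∫ ξ : ℝ, (1 + (2 * π * ξ) ^ 2) ^ s * ‖G ξ‖ ^ 2 = (hENormSq s G).toReal := by
  rw [integral_eq_lintegral_of_nonneg_ae (.of_forall fun ξ => by positivity)
    (aestronglyMeasurable_weight_mul_sq_norm s hG)]
  simp only [ofReal_weight_mul_sq_norm, hENormSq]

theorem memHs_iff_hENormSq_ne_top {s : ℝ} {f : ℝ → ℂ} :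
    MemHs s f ↔ Integrable f ∧ hENormSq s (𝓕 f) ≠ ∞ :=
  and_congr_right fun hf =>
    integrable_weight_mul_sq_norm_iff (continuous_fourier hf).aestronglyMeasurable

theorem hNorm_eq_sqrt_hENormSq {s : ℝ} {f : ℝ → ℂ} (hf : Integrable f) :
    hNorm s f = √(hENormSq s (𝓕 f)).toReal := by
  rw [hNorm, hNormSq, integral_weight_mul_sq_norm_eq (continuous_fourier hf).aestronglyMeasurable]

theorem aestronglyMeasurable_mul_fourier {m : ℝ → ℂ} (hm : Measurable m) {g : ℝ → ℂ}
    (hg : Integrable g) : AEStronglyMeasurable fun ξ => m (2 * π * ξ) * 𝓕 g ξ :=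
  .mul (hm.comp (measurable_const_mul _)).aestronglyMeasurable
    (continuous_fourier hg).aestronglyMeasurable

theorem multHNorm_eq_sqrt_hENormSq {s : ℝ} {m : ℝ → ℂ} (hm : Measurable m) {g : ℝ → ℂ}
    (hg : Integrable g) :
    multHNorm s m g = √(hENormSq s fun ξ => m (2 * π * ξ) * 𝓕 g ξ).toReal := by
  rw [multHNorm, integral_weight_mul_sq_norm_eq (aestronglyMeasurable_mul_fourier hm hg)]

theorem sq_lintegral_enorm_le_hENormSq (s : ℝ) {G : ℝ → ℂ} (hG : AEStronglyMeasurable G) :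
    (∫⁻ ξ, ‖G ξ‖ₑ) ^ 2 ≤ (∫⁻ ξ, hWeight (-s) ξ) * hENormSq s G := by
  simp only [hWeight_neg]
  exact sq_lintegral_le_lintegral_inv_mul (by fun_prop) hG.enorm
    (.of_forall (hWeight_ne_zero s)) (.of_forall (hWeight_ne_top s))

theorem lintegral_enorm_rpow_le_hENormSq {s p : ℝ} (hp : 2 < p) (hs : 1 / 2 - 1 / p ≤ s)
    {f : ℝ → ℂ} (hf : Integrable f) :
    ∫⁻ x, ‖f x‖ₑ ^ p ≤
      ENNReal.ofReal ((4 * p) ^ (p / 2) / (p - 2)) * hENormSq s (𝓕 f) ^ (p / 2) := by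
  have hr : 0 ≤ 1 - 2 / p := by
    rw [sub_nonneg, div_le_one (by linarith)]
    exact hp.le
  refine (lintegral_enorm_rpow_le_lintegral_fourier hp hf).trans ?_
  gcongr
  refine lintegral_mono fun ξ => mul_le_mul_left (ofReal_abs_rpow_le_hWeight hr ?_ ξ) _
  linarith [show 2 / p = 2 * (1 / p) by ring]

/-! ### The algebra property -/

theorem lintegral_mul_sq_lintegral_sub_mul_le {G : Type*} [AddGroup G] [MeasurableSpace G]
    [MeasurableAdd₂ G] [MeasurableNeg G] {μ : Measure G} [SFinite μ] [μ.IsAddRightInvariant]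
    {w f g : G → ℝ≥0∞} (hw : Measurable w) (hf : Measurable f) (hg : Measurable g)
    (hw₀ : ∀ x, w x ≠ 0) (hw_top : ∀ x, w x ≠ ∞) {K : ℝ≥0∞}
    (hK : ∀ ζ, w ζ * ∫⁻ ξ, (w (ζ - ξ) * w ξ)⁻¹ ∂μ ≤ K) :
    ∫⁻ ζ, w ζ * (∫⁻ ξ, f (ζ - ξ) * g ξ ∂μ) ^ 2 ∂μ ≤
      K * ((∫⁻ ξ, w ξ * f ξ ^ 2 ∂μ) * ∫⁻ ξ, w ξ * g ξ ^ 2 ∂μ) := by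
  let φ : G → ℝ≥0∞ := fun ξ => w ξ * f ξ ^ 2
  let γ : G → ℝ≥0∞ := fun ξ => w ξ * g ξ ^ 2
  have hφ : Measurable φ := by fun_prop
  have hγ : Measurable γ := by fun_prop
  calc ∫⁻ ζ, w ζ * (∫⁻ ξ, f (ζ - ξ) * g ξ ∂μ) ^ 2 ∂μ
      ≤ ∫⁻ ζ, K * ∫⁻ ξ, φ (ζ - ξ) * γ ξ ∂μ ∂μ := by
        refine lintegral_mono fun ζ => ?_
        have hcs := sq_lintegral_le_lintegral_inv_mul (μ := μ)
          (w := fun ξ => w (ζ - ξ) * w ξ) (f := fun ξ => f (ζ - ξ) * g ξ) (by fun_prop)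
          (by fun_prop) (.of_forall fun ξ => mul_ne_zero (hw₀ _) (hw₀ _))
          (.of_forall fun ξ => ENNReal.mul_ne_top (hw_top _) (hw_top _))
        refine (mul_le_mul_right hcs _).trans ?_
        rw [← mul_assoc]
        refine (mul_le_mul_left (hK ζ) _).trans_eq ?_
        simp only [φ, γ, mul_pow, mul_mul_mul_comm]
    _ = K * ∫⁻ ξ, ∫⁻ ζ, φ (ζ - ξ) * γ ξ ∂μ ∂μ := by
        have hm : Measurable fun z : G × G => φ (z.1 - z.2) * γ z.2 := by fun_prop
        rw [lintegral_const_mul _ hm.lintegral_prod_right',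
          lintegral_lintegral_swap hm.aemeasurable]
    _ = K * ((∫⁻ ξ, φ ξ ∂μ) * ∫⁻ ξ, γ ξ ∂μ) := by
        rw [← lintegral_const_mul _ hγ]
        refine congrArg _ (lintegral_congr fun ξ => ?_)
        rw [lintegral_mul_const _ (by fun_prop), lintegral_sub_right_eq_self φ]

theorem hWeight_mul_lintegral_inv_le {s : ℝ} (hs : 0 ≤ s) (ζ : ℝ) :
    hWeight s ζ * ∫⁻ ξ, (hWeight s (ζ - ξ) * hWeight s ξ)⁻¹ ≤
      ENNReal.ofReal (4 ^ s) * (2 * ∫⁻ ξ, hWeight (-s) ξ) := by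
  have hpt (ξ : ℝ) : hWeight s ζ * (hWeight s (ζ - ξ) * hWeight s ξ)⁻¹ ≤
      ENNReal.ofReal (4 ^ s) * (hWeight (-s) (ζ - ξ) + hWeight (-s) ξ) := by
    have ha := hWeight_ne_zero s (ζ - ξ)
    have hb := hWeight_ne_zero s ξ
    have ha' := hWeight_ne_top s (ζ - ξ)
    have hb' := hWeight_ne_top s ξ
    have h := hWeight_add_le hs (ζ - ξ) ξ
    rw [sub_add_cancel] at h
    refine (mul_le_mul_left h _).trans_eq ?_
    rw [hWeight_neg, hWeight_neg, ENNReal.mul_inv (.inl ha) (.inl ha'), mul_assoc]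
    congr 1
    rw [add_mul, ← mul_assoc, ENNReal.mul_inv_cancel ha ha', one_mul, mul_left_comm,
      ENNReal.mul_inv_cancel hb hb', mul_one, add_comm]
  rw [← lintegral_const_mul _ (by fun_prop)]
  refine (lintegral_mono hpt).trans_eq ?_
  rw [lintegral_const_mul _ (by fun_prop), lintegral_add_left (by fun_prop),
    lintegral_sub_left_eq_self (hWeight (-s)), two_mul]

theorem hENormSq_fourier_mul_le {s : ℝ} (hs : 0 ≤ s) {f g : ℝ → ℂ} (hf : Integrable f)
    (hg : Integrable g) (hG : Integrable (𝓕 g)) :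
    hENormSq s (𝓕 fun x => f x * g x) ≤
      ENNReal.ofReal (4 ^ s) * (2 * ∫⁻ ξ, hWeight (-s) ξ) *
        (hENormSq s (𝓕 f) * hENormSq s (𝓕 g)) := by
  refine (lintegral_mono fun ζ => ?_).trans
    (lintegral_mul_sq_lintegral_sub_mul_le (measurable_hWeight s)
      (continuous_fourier hf).measurable.enorm (continuous_fourier hg).measurable.enorm
      (hWeight_ne_zero s) (hWeight_ne_top s) (hWeight_mul_lintegral_inv_le hs))
  have hconv : ‖𝓕 (fun x => f x * g x) ζ‖ₑ ≤ ∫⁻ ξ, ‖𝓕 f (ζ - ξ)‖ₑ * ‖𝓕 g ξ‖ₑ := by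
    simp only [← smul_eq_mul (a := f _), fourier_smul_eq_integral hf hg hG, ← enorm_smul]
    exact enorm_integral_le_lintegral_enorm _
  gcongr

theorem MemHs.integrable_fourier {s : ℝ} (hs : 1 / 2 < s) {f : ℝ → ℂ} (hf : MemHs s f) :
    Integrable (𝓕 f) := by
  obtain ⟨hint, hfin⟩ := memHs_iff_hENormSq_ne_top.1 hf
  have hF := (continuous_fourier hint).aestronglyMeasurable (μ := volume)
  have hsq : (∫⁻ ξ, ‖𝓕 f ξ‖ₑ) ^ 2 < ∞ := (sq_lintegral_enorm_le_hENormSq s hF).trans_lt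
    (ENNReal.mul_lt_top (lintegral_hWeight_neg_ne_top hs).lt_top hfin.lt_top)
  exact ⟨hF, (ENNReal.pow_lt_top_iff.1 hsq).resolve_right two_ne_zero⟩

theorem MemHs.mul {s : ℝ} (hs : 1 / 2 < s) {f g : ℝ → ℂ} (hf : MemHs s f) (hg : MemHs s g) :
    MemHs s fun x => f x * g x := by
  obtain ⟨hf_int, hf_fin⟩ := memHs_iff_hENormSq_ne_top.1 hf
  obtain ⟨hg_int, hg_fin⟩ := memHs_iff_hENormSq_ne_top.1 hg
  have hg_bdd : ∀ᵐ x, ‖g x‖ ≤ ∫ ξ, ‖𝓕 g ξ‖ := by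
    filter_upwards [ae_eq_fourierInv_fourier hg_int (hg.integrable_fourier hs)] with x hx
    rw [hx]
    exact norm_fourierInv_le_integral_norm _ x
  refine memHs_iff_hENormSq_ne_top.2 ⟨hf_int.mul_bdd hg_int.1 hg_bdd, ?_⟩
  refine ne_top_of_le_ne_top ?_
    (hENormSq_fourier_mul_le (by linarith) hf_int hg_int (hg.integrable_fourier hs))
  have := lintegral_hWeight_neg_ne_top hs
  finiteness

theorem MemHs.pow {s : ℝ} (hs : 1 / 2 < s) {f : ℝ → ℂ} (hf : MemHs s f) (n : ℕ) :
    MemHs s fun x => f x ^ (n + 1) := by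
  induction n with
  | zero => simpa using hf
  | succ n ih => simpa only [pow_succ _ (n + 1)] using ih.mul hs hf

theorem MemHs.hENormSq_fourier_pow_le {s : ℝ} (hs : 1 / 2 < s) {f : ℝ → ℂ} (hf : MemHs s f)
    (n : ℕ) :
    hENormSq s (𝓕 fun x => f x ^ (n + 1)) ≤
      (ENNReal.ofReal (4 ^ s) * (2 * ∫⁻ ξ, hWeight (-s) ξ)) ^ n * hENormSq s (𝓕 f) ^ (n + 1) := by
  induction n with
  | zero => simp
  | succ n ih =>
    have h := hENormSq_fourier_mul_le (by linarith) (hf.pow hs n).1 hf.1 (hf.integrable_fourier hs)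
    simp only [← pow_succ] at h
    refine h.trans ((mul_le_mul_right (mul_le_mul_left ih _) _).trans_eq ?_)
    ring

/-! ### Fourier multipliers of negative order -/

theorem hENormSq_multiplier_mul_le {m : ℝ → ℂ} {c : ℝ} (hm : ∀ k, ‖m k‖ ^ 2 ≤ c) (s : ℝ)
    (G : ℝ → ℂ) :
    hENormSq s (fun ξ => m (2 * π * ξ) * G ξ) ≤ ENNReal.ofReal c * hENormSq s G := by
  rw [hENormSq, hENormSq, ← lintegral_const_mul' _ _ ENNReal.ofReal_ne_top]
  refine lintegral_mono fun ξ => ?_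
  have hmξ : ‖m (2 * π * ξ)‖ₑ ^ 2 ≤ ENNReal.ofReal c := by
    rw [← ofReal_norm, ← ENNReal.ofReal_pow (norm_nonneg _)]
    exact ENNReal.ofReal_le_ofReal (hm _)
  rw [enorm_mul, mul_pow, mul_left_comm]
  gcongr

theorem hENormSq_multiplier_fourier_le {m : ℝ → ℂ} {c a : ℝ}
    (hm : ∀ k, ‖m k‖ ^ 2 ≤ c * (1 + k ^ 2) ^ (-a)) (s : ℝ) (g : ℝ → ℂ) :
    hENormSq s (fun ξ => m (2 * π * ξ) * 𝓕 g ξ) ≤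
      ENNReal.ofReal c * (∫⁻ ξ, hWeight (-(a - s)) ξ) * (∫⁻ x, ‖g x‖ₑ) ^ 2 := by
  rw [← lintegral_const_mul _ (by fun_prop), ← lintegral_mul_const _ (by fun_prop)]
  refine lintegral_mono fun ξ => ?_
  have hmξ : ‖m (2 * π * ξ)‖ₑ ^ 2 ≤ ENNReal.ofReal c * hWeight (-a) ξ := by
    rw [← ofReal_norm, ← ENNReal.ofReal_pow (norm_nonneg _), hWeight,
      ← ENNReal.ofReal_mul' (by positivity)]
    exact ENNReal.ofReal_le_ofReal (hm _)
  calc hWeight s ξ * ‖m (2 * π * ξ) * 𝓕 g ξ‖ₑ ^ 2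
      ≤ hWeight s ξ * (ENNReal.ofReal c * hWeight (-a) ξ * (∫⁻ x, ‖g x‖ₑ) ^ 2) := by
        rw [enorm_mul, mul_pow]
        gcongr
        exact enorm_fourier_le_lintegral_enorm g ξ
    _ = ENNReal.ofReal c * hWeight (-(a - s)) ξ * (∫⁻ x, ‖g x‖ₑ) ^ 2 := by
        rw [neg_sub, sub_eq_add_neg, hWeight_add]
        ring

theorem exists_hENormSq_multiplier_pow_le_of_lt {m : ℝ → ℂ} {c a s : ℝ}
    (hm : ∀ k, ‖m k‖ ^ 2 ≤ c * (1 + k ^ 2) ^ (-a)) {n : ℕ} (hn : 3 ≤ n)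
    (hs : 1 / 2 - 1 / n ≤ s) (hsa : s < a - 1 / 2) :
    ∃ K ≠ ∞, ∀ f : ℝ → ℂ, MemHs s f → Integrable (fun x => f x ^ n) ∧
      hENormSq s (fun ξ => m (2 * π * ξ) * 𝓕 (fun x => f x ^ n) ξ) ≤
        K * hENormSq s (𝓕 f) ^ n := by
  have hn' : (2 : ℝ) < n := by exact_mod_cast hn
  set S := ENNReal.ofReal ((4 * n) ^ (n / 2 : ℝ) / (n - 2))
  refine ⟨ENNReal.ofReal c * (∫⁻ ξ, hWeight (-(a - s)) ξ) * S ^ 2, ?_, fun f hf => ?_⟩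
  · have := lintegral_hWeight_neg_ne_top (by linarith : 1 / 2 < a - s)
    finiteness
  obtain ⟨hf_int, hf_fin⟩ := memHs_iff_hENormSq_ne_top.1 hf
  have hSobolev : ∫⁻ x, ‖f x ^ n‖ₑ ≤ S * hENormSq s (𝓕 f) ^ (n / 2 : ℝ) := by
    simpa only [enorm_pow, ENNReal.rpow_natCast] using
      lintegral_enorm_rpow_le_hENormSq hn' hs hf_int
  refine ⟨⟨hf_int.1.pow n, hSobolev.trans_lt (by finiteness)⟩, ?_⟩
  calc hENormSq s (fun ξ => m (2 * π * ξ) * 𝓕 (fun x => f x ^ n) ξ)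
      ≤ ENNReal.ofReal c * (∫⁻ ξ, hWeight (-(a - s)) ξ) *
          (S * hENormSq s (𝓕 f) ^ (n / 2 : ℝ)) ^ 2 :=
        (hENormSq_multiplier_fourier_le hm s _).trans (by gcongr)
    _ = _ := by
        rw [mul_pow, ← ENNReal.rpow_mul_natCast, Nat.cast_ofNat, div_mul_cancel₀ _ two_ne_zero,
          ENNReal.rpow_natCast, mul_assoc _ (S ^ 2)]

theorem exists_hENormSq_multiplier_pow_le_of_half_lt {m : ℝ → ℂ} {c s : ℝ}
    (hm : ∀ k, ‖m k‖ ^ 2 ≤ c) (hs : 1 / 2 < s) {n : ℕ} (hn : n ≠ 0) :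
    ∃ K ≠ ∞, ∀ f : ℝ → ℂ, MemHs s f → Integrable (fun x => f x ^ n) ∧
      hENormSq s (fun ξ => m (2 * π * ξ) * 𝓕 (fun x => f x ^ n) ξ) ≤
        K * hENormSq s (𝓕 f) ^ n := by
  obtain ⟨n, rfl⟩ := Nat.exists_eq_succ_of_ne_zero hn
  set A := ENNReal.ofReal (4 ^ s) * (2 * ∫⁻ ξ, hWeight (-s) ξ)
  refine ⟨ENNReal.ofReal c * A ^ n, ?_, fun f hf => ⟨(hf.pow hs n).1, ?_⟩⟩
  · have := lintegral_hWeight_neg_ne_top hs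
    finiteness
  rw [mul_assoc]
  exact (hENormSq_multiplier_mul_le hm s _).trans
    (mul_le_mul_right (hf.hENormSq_fourier_pow_le hs n) _)

-- Below `s = a - 1/2` the multiplier absorbs the weight and the `L¹` norm of the power suffices;
-- above `s = 1/2` the Sobolev space is an algebra. Since `1 < a`, the two ranges overlap.
theorem exists_hENormSq_multiplier_pow_le {m : ℝ → ℂ} {c a s : ℝ} (ha : 1 < a)
    (hm : ∀ k, ‖m k‖ ^ 2 ≤ c * (1 + k ^ 2) ^ (-a)) {n : ℕ} (hn : 3 ≤ n)
    (hs : 1 / 2 - 1 / n ≤ s) :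
    ∃ K ≠ ∞, ∀ f : ℝ → ℂ, MemHs s f → Integrable (fun x => f x ^ n) ∧
      hENormSq s (fun ξ => m (2 * π * ξ) * 𝓕 (fun x => f x ^ n) ξ) ≤
        K * hENormSq s (𝓕 f) ^ n := by
  obtain hsa | hsa := lt_or_ge s (a - 1 / 2)
  · exact exists_hENormSq_multiplier_pow_le_of_lt hm hn hs hsa
  have hc : 0 ≤ c := by simpa using (sq_nonneg _).trans (hm 0)
  refine exists_hENormSq_multiplier_pow_le_of_half_lt (c := c) (fun k => (hm k).trans ?_)
    (by linarith) (by omega)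
  refine mul_le_of_le_one_right hc (rpow_le_one_of_one_le_of_nonpos ?_ (by linarith))
  exact le_add_of_nonneg_right (sq_nonneg k)

theorem psi_trilinear_estimate_general {m : ℝ → ℂ} (hm : Measurable m) {c a : ℝ} (ha : 1 < a)
    (hma : ∀ k, ‖m k‖ ^ 2 ≤ c * (1 + k ^ 2) ^ (-a)) {n : ℕ} (hn : 3 ≤ n) {s : ℝ}
    (hs : 1 / 2 - 1 / n ≤ s) :
    ∃ C > 0, ∀ f : ℝ → ℂ, MemHs s f →
      Integrable (fun x => f x ^ n) ∧
      Integrable (fun ξ : ℝ => (1 + (2 * π * ξ) ^ 2) ^ s *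
        ‖m (2 * π * ξ) * 𝓕 (fun x => f x ^ n) ξ‖ ^ 2) ∧
      multHNorm s m (fun x => f x ^ n) ≤ C * hNorm s f ^ n := by
  obtain ⟨K, hK, hbound⟩ := exists_hENormSq_multiplier_pow_le ha hma hn hs
  refine ⟨√K.toReal + 1, by positivity, fun f hf => ?_⟩
  obtain ⟨hf_int, hf_fin⟩ := memHs_iff_hENormSq_ne_top.1 hf
  obtain ⟨hpow, hle⟩ := hbound f hf
  have hfin : K * hENormSq s (𝓕 f) ^ n ≠ ∞ := by finiteness
  refine ⟨hpow, (integrable_weight_mul_sq_norm_iff (aestronglyMeasurable_mul_fourier hm hpow)).2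
    (ne_top_of_le_ne_top hfin hle), ?_⟩
  rw [multHNorm_eq_sqrt_hENormSq hm hpow, hNorm_eq_sqrt_hENormSq hf_int]
  calc √(hENormSq s fun ξ => m (2 * π * ξ) * 𝓕 (fun x => f x ^ n) ξ).toReal
      ≤ √(K * hENormSq s (𝓕 f) ^ n).toReal := by gcongr
    _ = √K.toReal * √(hENormSq s (𝓕 f)).toReal ^ n := by
        rw [ENNReal.toReal_mul, ENNReal.toReal_pow, sqrt_mul ENNReal.toReal_nonneg,
          sqrt_eq_rpow (_ ^ n), sqrt_eq_rpow (hENormSq s _).toReal,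
          rpow_pow_comm ENNReal.toReal_nonneg]
    _ ≤ (√K.toReal + 1) * √(hENormSq s (𝓕 f)).toReal ^ n := by
        gcongr
        exact le_add_of_nonneg_right zero_le_one

theorem exists_sq_norm_psi_le {γ δ : ℝ} (hγ : 0 ≤ γ) (hδ : 0 < δ) :
    ∃ c, ∀ k : ℝ, ‖((k / (1 + γ * k ^ 2 + δ * k ^ 4) : ℝ) : ℂ)‖ ^ 2 ≤
      c * (1 + k ^ 2) ^ (-3 : ℝ) := by
  obtain ⟨μ, hμ, hμ₁, hμδ⟩ : ∃ μ : ℝ, 0 < μ ∧ μ ≤ 1 ∧ μ ≤ δ :=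
    ⟨min 1 δ, by positivity, min_le_left _ _, min_le_right _ _⟩
  refine ⟨4 / μ ^ 2, fun k => ?_⟩
  have hden : μ / 2 * (1 + k ^ 2) ^ 2 ≤ 1 + γ * k ^ 2 + δ * k ^ 4 := by
    have h₁ : 0 ≤ γ * k ^ 2 := by positivity
    have h₂ : μ * k ^ 4 ≤ δ * k ^ 4 := by gcongr
    nlinarith [mul_nonneg hμ.le (sq_nonneg (k ^ 2 - 1))]
  calc ‖((k / (1 + γ * k ^ 2 + δ * k ^ 4) : ℝ) : ℂ)‖ ^ 2
      = k ^ 2 / (1 + γ * k ^ 2 + δ * k ^ 4) ^ 2 := by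
        rw [Complex.norm_real, norm_eq_abs, sq_abs, div_pow]
    _ ≤ (1 + k ^ 2) / (μ / 2 * (1 + k ^ 2) ^ 2) ^ 2 := by
        gcongr
        exact le_add_of_nonneg_left zero_le_one
    _ = 4 / μ ^ 2 * (1 + k ^ 2) ^ (-3 : ℝ) := by
        rw [rpow_neg (by positivity), rpow_ofNat]
        field_simp
        norm_num

/-- **Trilinear estimate** (Proposition 2.5): for `γ1, δ1 > 0` and every `s ≥ 1/6`
there is `C = C_s > 0` with `‖ψ(∂ₓ)(η³)‖_{Hˢ} ≤ C ‖η‖_{Hˢ}³`, where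
`ψ(k) = k/(1 + γ1k² + δ1k⁴)`. -/
theorem psi_trilinear_estimate (γ1 δ1 : ℝ) (hγ1 : 0 < γ1) (hδ1 : 0 < δ1)
    (s : ℝ) (hs : 1 / 6 ≤ s) :
    ∃ C > 0, ∀ η : ℝ → ℂ, MemHs s η →
      multHNorm s (fun k : ℝ => ((k / (1 + γ1 * k ^ 2 + δ1 * k ^ 4) : ℝ) : ℂ))
        (fun x => η x ^ 3) ≤ C * hNorm s η ^ 3 := by
  obtain ⟨c, hψ⟩ := exists_sq_norm_psi_le hγ1.le hδ1
  obtain ⟨C, hC, hbound⟩ := psi_trilinear_estimate_general (by fun_prop) (by norm_num) hψ le_rfl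
    (s := s) (by norm_num; linarith)
  exact ⟨C, hC, fun η hη => (hbound η hη).2.2⟩
end
end

section
/- Energy identity: let γ1 > 0, δ1 > 0, γ2, δ2, γ be real constants and let η : ℝ × [0,T] → ℝ be a smooth solution of the fifth-order KdV–BBM equation such that x ↦ η(x,t) is a Schwartz function for each t and t ↦ η(·,t) is smooth into the Schwartz space. Then for every t ∈ [0,T], (d/dt) (1/2) ∫_ℝ ( η² + γ1 η_x² + δ1 η_xx² ) dx = (γ − 7/48) ∫_ℝ η_x³ dx. -/
/-!
STATEMENT 10 (energy identity, equation (apriori1) of the paper): if `η` is a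
smooth solution on `ℝ × [0,T]` of the fifth-order KdV–BBM equation
`η_t + η_x − γ1 η_{xxt} + γ2 η_{xxx} + δ1 η_{xxxxt} + δ2 η_{xxxxx}
  + (3/4)(η²)_x + γ(η²)_{xxx} − (7/48)(η_x²)_x − (1/8)(η³)_x = 0`,
Schwartz in `x` for each `t` and smooth in `t` into the Schwartz space, then
`(d/dt)(1/2)∫(η² + γ1 η_x² + δ1 η_{xx}²)dx = (γ − 7/48) ∫ η_x³ dx`.

The solution is formalized as a curve `η : ℝ → 𝓢(ℝ,ℝ)` of Schwartz functions
(`η t` is the profile `x ↦ η(x,t)`); smoothness in time into the Schwartz space is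
encoded by a sequence `D n` of time-derivative curves, `D 0 = η`, where `D (n+1) t`
is the derivative (within `[0,T]`) of `D n` at `t` in the topology of `𝓢(ℝ,ℝ)`.
In particular `D 1 t = η_t(·,t)`.
-/

noncomputable section
open MeasureTheory Real Set Filter Topology

/-!
Pair the equation with `η` in `L²`. The odd-order linear terms drop out because odd derivatives are
skew-adjoint, and `∫ η (ηⁿ)_x` vanishes because its integrand is an exact derivative. Integrating
the mixed terms by parts gives `∫ (η η_t + γ1 η_x η_xt + δ1 η_xx η_xxt)`, the time derivative of the
energy: squared `L²` norms can be differentiated along a curve in `𝓢(ℝ, ℝ)` because `𝓢 → L²` is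
continuous. What survives is `-∫ η_x³` twice: from `∫ η (η_x²)_x` by parts, and from
`∫ η (η²)_xxx = ∫ η_xx (η²)_x` because `η_xx (η²)_x = η (η_x²)_x` pointwise.
-/

open Asymptotics SchwartzMap
open scoped SchwartzMap

local notation "∂ₓ" => SchwartzMap.derivCLM ℝ ℝ

section TopologicalVectorSpace

variable {𝕜 E F : Type*} [NontriviallyNormedField 𝕜]
  [AddCommGroup E] [Module 𝕜 E] [TopologicalSpace E]
  [AddCommGroup F] [Module 𝕜 F] [TopologicalSpace F]
  {f : 𝕜 → E} {f' : E} {s : Set 𝕜} {x : 𝕜}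

theorem hasDerivWithinAt_iff_tendsto_slope_zero [IsTopologicalAddGroup E] [ContinuousSMul 𝕜 E] :
    HasDerivWithinAt f f' s x ↔
      Tendsto (fun h => h⁻¹ • (f (x + h) - f x)) (𝓝[{h | h ≠ 0 ∧ x + h ∈ s}] 0) (𝓝 f') := by
  have hmap : map (x + ·) (𝓝[{h | h ≠ 0 ∧ x + h ∈ s}] 0) = 𝓝[s \ {x}] x := by
    have h := (Homeomorph.addLeft x).isOpenEmbedding.map_nhdsWithin_preimage_eq (s \ {x}) 0
    simpa [preimage, and_comm] using h
  rw [hasDerivWithinAt_iff_hasFDerivWithinAt, ← hasFDerivWithinAt_sdiff_singleton_self,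
    hasFDerivWithinAt_iff_isLittleOTVS, ← hmap, isLittleOTVS_map,
    isLittleOTVS_iff_tendsto_inv_smul (by simp +contextual), ← tendsto_sub_nhds_zero_iff (x := f')]
  refine tendsto_congr' ?_
  filter_upwards [self_mem_nhdsWithin] with h hh
  simp [smul_sub, inv_smul_smul₀ hh.1]

theorem hasDerivWithinAt_continuousLinearMap_comp [ContinuousSMul 𝕜 E] [ContinuousSMul 𝕜 F]
    (L : E →L[𝕜] F) (h : HasDerivWithinAt f f' s x) :
    HasDerivWithinAt (fun y => L (f y)) (L f') s x := by
  rw [hasDerivWithinAt_iff_hasFDerivWithinAt, hasFDerivWithinAt_iff_isLittleOTVS] at h ⊢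
  simpa [Function.comp_def] using L.isBigOTVS_fun_comp.trans_isLittleOTVS h

end TopologicalVectorSpace

section L2

variable {E F : Type*} [NormedAddCommGroup E] [NormedSpace ℝ E] [MeasurableSpace E] [BorelSpace E]
  [SecondCountableTopology E] [NormedAddCommGroup F] {μ : Measure E} [μ.HasTemperateGrowth]

theorem integral_inner_eq_inner_toLp {𝕜 : Type*} [RCLike 𝕜] [NormedSpace ℝ F]
    [InnerProductSpace 𝕜 F] (f g : 𝓢(E, F)) :
    ∫ x, inner 𝕜 (f x) (g x) ∂μ = inner 𝕜 (f.toLp 2 μ) (g.toLp 2 μ) := by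
  refine integral_congr_ae ?_
  filter_upwards [f.coeFn_toLp 2 μ, g.coeFn_toLp 2 μ] with x hf hg
  rw [hf, hg]

theorem hasDerivWithinAt_integral_norm_sq [InnerProductSpace ℝ F] {u : ℝ → 𝓢(E, F)}
    {u' : 𝓢(E, F)} {s : Set ℝ} {t : ℝ} (h : HasDerivWithinAt u u' s t) :
    HasDerivWithinAt (fun τ => ∫ x, ‖u τ x‖ ^ 2 ∂μ) (2 * ∫ x, inner ℝ (u t x) (u' x) ∂μ) s t := by
  simpa only [integral_inner_eq_inner_toLp, ← real_inner_self_eq_norm_sq, toLpCLM_apply] using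
    (hasDerivWithinAt_continuousLinearMap_comp (toLpCLM ℝ F 2 μ) h).norm_sq

/-- The `L²` pairing `g ↦ ∫ f g` with a real Schwartz function, as a functional on the Schwartz
space. -/
def integralMulCLM (μ : Measure E) [μ.HasTemperateGrowth] (f : 𝓢(E, ℝ)) : 𝓢(E, ℝ) →L[ℝ] ℝ :=
  integralCLM ℝ μ ∘L pairing (.mul ℝ ℝ) f

theorem integralMulCLM_apply (μ : Measure E) [μ.HasTemperateGrowth] (f g : 𝓢(E, ℝ)) :
    integralMulCLM μ f g = ∫ x, f x * g x ∂μ :=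
  rfl

end L2

section Deriv

variable {E F V : Type*} [NormedAddCommGroup E] [NormedSpace ℝ E] [NormedAddCommGroup F]
  [NormedSpace ℝ F] [NormedAddCommGroup V] [NormedSpace ℝ V]

theorem coe_iterate_derivCLM {𝕜 : Type*} [RCLike 𝕜] [NormedSpace 𝕜 F]
    [SMulCommClass ℝ 𝕜 F] (f : 𝓢(ℝ, F)) (n : ℕ) :
    ⇑((derivCLM 𝕜 F)^[n] f) = iteratedDeriv n f := by
  induction n with
  | zero => simp
  | succ n ih =>
    ext x
    rw [Function.iterate_succ_apply', derivCLM_apply, ih, iteratedDeriv_succ]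

theorem integral_bilinear_iteratedDeriv_add (L : E →L[ℝ] F →L[ℝ] V) (f : 𝓢(ℝ, E)) (g : 𝓢(ℝ, F))
    (m n : ℕ) :
    ∫ x, L (f x) (iteratedDeriv (m + n) g x) =
      (-1 : ℝ) ^ m • ∫ x, L (iteratedDeriv m f x) (iteratedDeriv n g x) := by
  induction m generalizing n with
  | zero => simp
  | succ m ih =>
    have hibp := integral_bilinear_deriv_right_eq_neg_left
      ((derivCLM ℝ E)^[m] f) ((derivCLM ℝ F)^[n] g) L
    rw [coe_iterate_derivCLM, coe_iterate_derivCLM, ← iteratedDeriv_succ,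
      ← iteratedDeriv_succ] at hibp
    rw [add_right_comm, add_assoc, ih, hibp, smul_neg, pow_succ, mul_neg_one, neg_smul]

theorem integral_mul_iteratedDeriv_add (f g : 𝓢(ℝ, ℝ)) (m n : ℕ) :
    ∫ x, f x * iteratedDeriv (m + n) g x =
      (-1) ^ m * ∫ x, iteratedDeriv m f x * iteratedDeriv n g x :=
  integral_bilinear_iteratedDeriv_add (.mul ℝ ℝ) f g m n

theorem integral_mul_iteratedDeriv_self_of_odd (f : 𝓢(ℝ, ℝ)) {n : ℕ} (hn : Odd n) :
    ∫ x, f x * iteratedDeriv n f x = 0 := by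
  have h := integral_mul_iteratedDeriv_add f f n 0
  simp only [add_zero, hn.neg_one_pow, iteratedDeriv_zero, mul_comm (iteratedDeriv n f _)] at h
  linarith

end Deriv

section Pow

variable {E : Type*} [NormedAddCommGroup E] [NormedSpace ℝ E]

/-- The pointwise power `f ^ n` of a real Schwartz function, as a Schwartz function. The exponent
must be nonzero because constants are not Schwartz. -/
def schwartzPow (f : 𝓢(E, ℝ)) (n : ℕ) [NeZero n] : 𝓢(E, ℝ) :=
  smulLeftCLM ℝ (fun x => f x ^ (n - 1)) f

theorem coe_schwartzPow (f : 𝓢(E, ℝ)) (n : ℕ) [NeZero n] :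
    ⇑(schwartzPow f n) = fun x => f x ^ n := by
  ext x
  exact (smulLeftCLM_apply_apply (f.hasTemperateGrowth.pow (n - 1)) f x).trans
    (pow_sub_one_mul (NeZero.ne n) (f x))

theorem integral_pow_mul_deriv_eq_zero (f : 𝓢(ℝ, ℝ)) (n : ℕ) : ∫ x, f x ^ n * deriv f x = 0 := by
  have h : ∫ x, deriv (schwartzPow f (n + 1)) x = 0 :=
    integral_eq_zero_of_hasDerivAt_of_integrable (fun x => (schwartzPow f (n + 1)).hasDerivAt x)
      (∂ₓ (schwartzPow f (n + 1))).integrable (schwartzPow f (n + 1)).integrable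
  simp only [coe_schwartzPow, deriv_fun_pow f.differentiableAt, Nat.add_sub_cancel, mul_assoc,
    integral_const_mul] at h
  exact (mul_eq_zero.1 h).resolve_left (mod_cast n.succ_ne_zero)

theorem integral_mul_deriv_pow_eq_zero (f : 𝓢(ℝ, ℝ)) (n : ℕ) :
    ∫ x, f x * deriv (fun y => f y ^ n) x = 0 := by
  obtain rfl | hn := eq_or_ne n 0
  · simp
  calc ∫ x, f x * deriv (fun y => f y ^ n) x
      = ∫ x, n * (f x ^ n * deriv f x) := by
        congr with x
        rw [deriv_fun_pow f.differentiableAt, ← mul_pow_sub_one hn]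
        ring
    _ = 0 := by rw [integral_const_mul, integral_pow_mul_deriv_eq_zero, mul_zero]

theorem integral_mul_deriv_deriv_sq (f : 𝓢(ℝ, ℝ)) :
    ∫ x, f x * deriv (fun y => deriv f y ^ 2) x = -∫ x, deriv f x ^ 3 := by
  have h := integral_mul_deriv_eq_neg_deriv_mul f (schwartzPow (∂ₓ f) 2)
  simpa only [coe_schwartzPow, derivCLM_apply, ← pow_succ'] using h

theorem integral_mul_iteratedDeriv_three_sq (f : 𝓢(ℝ, ℝ)) :
    ∫ x, f x * iteratedDeriv 3 (fun y => f y ^ 2) x = -∫ x, deriv f x ^ 3 := by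
  have hibp := integral_mul_iteratedDeriv_add f (schwartzPow f 2) 2 1
  have hswap (x : ℝ) : iteratedDeriv 2 f x * deriv (fun y => f y ^ 2) x =
      f x * deriv (fun y => deriv f y ^ 2) x := by
    rw [deriv_fun_pow f.differentiableAt, deriv_fun_pow (f := deriv f) (∂ₓ f).differentiableAt,
      iteratedDeriv_succ, iteratedDeriv_one]
    ring
  simp only [coe_schwartzPow, iteratedDeriv_one, hswap, integral_mul_deriv_deriv_sq] at hibp
  simpa using hibp

end Pow

section KdVBBM

variable (γ1 δ1 γ2 δ2 γ : ℝ)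

/-- The left-hand side of the fifth-order KdV–BBM equation, with `u` in place of the profile
`η(·, t)` and `v` in place of its time derivative `η_t(·, t)`. -/
def kdvBBMResidual (u v : 𝓢(ℝ, ℝ)) : 𝓢(ℝ, ℝ) :=
  v + ∂ₓ u - γ1 • ∂ₓ^[2] v + γ2 • ∂ₓ^[3] u + δ1 • ∂ₓ^[4] v + δ2 • ∂ₓ^[5] u
    + (3 / 4 : ℝ) • ∂ₓ (schwartzPow u 2) + γ • ∂ₓ^[3] (schwartzPow u 2)
    - (7 / 48 : ℝ) • ∂ₓ (schwartzPow (∂ₓ u) 2) - (1 / 8 : ℝ) • ∂ₓ (schwartzPow u 3)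

theorem kdvBBMResidual_apply (u v : 𝓢(ℝ, ℝ)) (x : ℝ) :
    kdvBBMResidual γ1 δ1 γ2 δ2 γ u v x =
      v x + deriv u x - γ1 * iteratedDeriv 2 v x + γ2 * iteratedDeriv 3 u x
        + δ1 * iteratedDeriv 4 v x + δ2 * iteratedDeriv 5 u x
        + (3 / 4) * deriv (fun y => u y ^ 2) x + γ * iteratedDeriv 3 (fun y => u y ^ 2) x
        - (7 / 48) * deriv (fun y => deriv u y ^ 2) x - (1 / 8) * deriv (fun y => u y ^ 3) x := by
  simp only [kdvBBMResidual, add_apply, sub_apply, smul_apply, smul_eq_mul, coe_iterate_derivCLM,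
    derivCLM_apply, coe_schwartzPow]

theorem integral_mul_kdvBBMResidual (u v : 𝓢(ℝ, ℝ)) :
    ∫ x, u x * kdvBBMResidual γ1 δ1 γ2 δ2 γ u v x =
      (∫ x, u x * v x) + γ1 * (∫ x, deriv u x * deriv v x)
        + δ1 * (∫ x, iteratedDeriv 2 u x * iteratedDeriv 2 v x)
        - (γ - 7 / 48) * ∫ x, deriv u x ^ 3 := by
  have hu1 := integral_mul_iteratedDeriv_self_of_odd u (n := 1) (by decide)
  have hu3 := integral_mul_iteratedDeriv_self_of_odd u (n := 3) (by decide)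
  have hu5 := integral_mul_iteratedDeriv_self_of_odd u (n := 5) (by decide)
  have hv2 := integral_mul_iteratedDeriv_add u v 1 1
  have hv4 := integral_mul_iteratedDeriv_add u v 2 2
  rw [iteratedDeriv_one] at hu1
  simp only [iteratedDeriv_one, Nat.reduceAdd] at hv2 hv4
  rw [← integralMulCLM_apply volume u (kdvBBMResidual γ1 δ1 γ2 δ2 γ u v), kdvBBMResidual]
  simp only [map_add, map_sub, map_smul, smul_eq_mul]
  simp only [integralMulCLM_apply, coe_iterate_derivCLM, derivCLM_apply, coe_schwartzPow,
    hu1, hu3, hu5, hv2, hv4, integral_mul_deriv_pow_eq_zero, integral_mul_deriv_deriv_sq,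
    integral_mul_iteratedDeriv_three_sq]
  ring

/-- The energy `½ ∫ (u² + γ1 u_x² + δ1 u_xx²)` of a profile. -/
def kdvBBMEnergy (u : 𝓢(ℝ, ℝ)) : ℝ :=
  (1 / 2) * ∫ x, (u x ^ 2 + γ1 * deriv u x ^ 2 + δ1 * iteratedDeriv 2 u x ^ 2)

theorem kdvBBMEnergy_eq_add_integrals (u : 𝓢(ℝ, ℝ)) :
    kdvBBMEnergy γ1 δ1 u =
      (1 / 2) * ((∫ x, u x ^ 2) + γ1 * (∫ x, deriv u x ^ 2)
        + δ1 * ∫ x, iteratedDeriv 2 u x ^ 2) := by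
  have hint (n : ℕ) : Integrable fun x => iteratedDeriv n u x ^ 2 := by
    simpa only [coe_schwartzPow, coe_iterate_derivCLM] using
      (schwartzPow (∂ₓ^[n] u) 2).integrable (μ := volume)
  have h0 : Integrable fun x => u x ^ 2 := by simpa using hint 0
  have h1 : Integrable fun x => deriv u x ^ 2 := by simpa using hint 1
  rw [kdvBBMEnergy, integral_add (h0.fun_add (h1.const_mul γ1)) ((hint 2).const_mul δ1),
    integral_add h0 (h1.const_mul γ1), integral_const_mul, integral_const_mul]

theorem hasDerivWithinAt_kdvBBMEnergy {u : ℝ → 𝓢(ℝ, ℝ)} {u' : 𝓢(ℝ, ℝ)} {s : Set ℝ} {t : ℝ}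
    (h : HasDerivWithinAt u u' s t) :
    HasDerivWithinAt (fun τ => kdvBBMEnergy γ1 δ1 (u τ))
      ((∫ x, u t x * u' x) + γ1 * (∫ x, deriv (u t) x * deriv u' x)
        + δ1 * ∫ x, iteratedDeriv 2 (u t) x * iteratedDeriv 2 u' x) s t := by
  have hx := hasDerivWithinAt_continuousLinearMap_comp ∂ₓ h
  have hxx : HasDerivWithinAt (fun τ => ∂ₓ^[2] (u τ)) (∂ₓ^[2] u') s t :=
    hasDerivWithinAt_continuousLinearMap_comp ∂ₓ hx
  have hE := (((hasDerivWithinAt_integral_norm_sq (μ := volume) h).fun_add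
    ((hasDerivWithinAt_integral_norm_sq (μ := volume) hx).const_mul γ1)).fun_add
    ((hasDerivWithinAt_integral_norm_sq (μ := volume) hxx).const_mul δ1)).const_mul (1 / 2)
  simp only [norm_eq_abs, sq_abs, Real.inner_apply, derivCLM_apply, coe_iterate_derivCLM] at hE
  simp only [kdvBBMEnergy_eq_add_integrals]
  exact hE.congr_deriv (by ring)

theorem energy_identity_general {η : ℝ → 𝓢(ℝ, ℝ)} {η' : 𝓢(ℝ, ℝ)} {s : Set ℝ} {t : ℝ}
    (hη : HasDerivWithinAt η η' s t) (heq : kdvBBMResidual γ1 δ1 γ2 δ2 γ (η t) η' = 0) :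
    HasDerivWithinAt (fun τ => kdvBBMEnergy γ1 δ1 (η τ))
      ((γ - 7 / 48) * ∫ x, deriv (η t) x ^ 3) s t := by
  have htest := integral_mul_kdvBBMResidual γ1 δ1 γ2 δ2 γ (η t) η'
  simp only [heq, zero_apply, mul_zero, integral_zero] at htest
  exact (hasDerivWithinAt_kdvBBMEnergy γ1 δ1 hη).congr_deriv (sub_eq_zero.1 htest.symm)

end KdVBBM

theorem energy_identity (γ1 δ1 γ2 δ2 γ T : ℝ) (hγ1 : 0 < γ1) (hδ1 : 0 < δ1)
    (hT : 0 < T)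
    (η : ℝ → SchwartzMap ℝ ℝ) (D : ℕ → ℝ → SchwartzMap ℝ ℝ) (hD0 : D 0 = η)
    -- `t ↦ η(·,t)` is smooth from `[0,T]` into the Schwartz space, with n-th
    -- time derivative `D n`:
    (hDdiff : ∀ n : ℕ, ∀ t ∈ Icc (0 : ℝ) T,
      Tendsto (fun h : ℝ => h⁻¹ • (D n (t + h) - D n t))
        (nhdsWithin 0 {h : ℝ | h ≠ 0 ∧ t + h ∈ Icc (0 : ℝ) T}) (nhds (D (n + 1) t)))
    -- `η` solves the fifth-order KdV–BBM equation on `ℝ × [0,T]`: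
    (heq : ∀ t ∈ Icc (0 : ℝ) T, ∀ x : ℝ,
      D 1 t x + deriv (fun y => η t y) x
        - γ1 * iteratedDeriv 2 (fun y => D 1 t y) x
        + γ2 * iteratedDeriv 3 (fun y => η t y) x
        + δ1 * iteratedDeriv 4 (fun y => D 1 t y) x
        + δ2 * iteratedDeriv 5 (fun y => η t y) x
        + (3 / 4) * deriv (fun y => η t y ^ 2) x
        + γ * iteratedDeriv 3 (fun y => η t y ^ 2) x
        - (7 / 48) * deriv (fun y => (deriv (fun z => η t z) y) ^ 2) x
        - (1 / 8) * deriv (fun y => η t y ^ 3) x = 0) :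
    -- conclusion: the energy identity
    ∀ t ∈ Icc (0 : ℝ) T,
      HasDerivWithinAt
        (fun τ : ℝ => (1 / 2) * ∫ x : ℝ,
          (η τ x ^ 2 + γ1 * (deriv (fun y => η τ y) x) ^ 2
            + δ1 * (iteratedDeriv 2 (fun y => η τ y) x) ^ 2))
        ((γ - 7 / 48) * ∫ x : ℝ, (deriv (fun y => η t y) x) ^ 3)
        (Icc (0 : ℝ) T) t := by
  intro t ht
  refine energy_identity_general γ1 δ1 γ2 δ2 γ
    (hasDerivWithinAt_iff_tendsto_slope_zero.2 (hD0 ▸ hDdiff 0 t ht)) (SchwartzMap.ext fun x => ?_)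
  exact (kdvBBMResidual_apply γ1 δ1 γ2 δ2 γ (η t) (D 1 t) x).trans (heq t ht x)
end
end
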